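/- arXiv:2211.01715 — 2 statements merged into one kernel-verified Lean document; each statement's English description precedes it below -/
import Mathlib

section
/- Let n ≥ 2 be an integer. Let F be a totally real number field of degree n, embedded in ℝ^n via a fixed ordering σ₁,…,σ_n of its real embeddings, let E₊ be its group of totally positive units, and let π ∈ F be a totally positive element; set π_H = (σ₁(π)⋯σ_n(π))^{−1/n}·(σ₁(π),…,σ_n(π)) ∈ ℝ_{>0}^n. Then there exist a real number R₁ > 0 and a function K₁ : ℝ → ℝ with the following property: for every R > R₁ and every M > K₁(R), (0) there exist g₁,…,g_{n−1} ∈ E₊ and g_π ∈ π_H·E₊ ⊂ ℝ_{>0}^n with ‖Log(g_i) − l_i(M)‖_∞ < R for i = 1,…,n−1 and ‖Log(g_π) − l_0(M)‖_∞ < R; and (i)–(ii) for ANY such choice of g₁,…,g_{n−1} ∈ E₊ and g_π ∈ π_H·E₊ (writing g_n = g_π): the subgroup ⟨g₁,…,g_{n−1}⟩ has finite index in E₊, and for every permutation τ of {1,…,n} one has δ([g_{τ(1)} | ⋯ | g_{τ(n−1)}]) = sign(τ). -/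
/-!
Put `n = m + 1`. Existence is Dirichlet's unit theorem: the logarithms of the totally positive units
are uniformly dense in the hyperplane of vectors with coordinate sum zero
(`exists_totPosUnit_near`), and this hyperplane contains `l_i(M)` and `Log π_H`.

For the finite index, the matrix with rows `Log g_t` with the coordinate `0` removed is strictly
diagonally dominant when `M` is large compared with `R`, so the logarithms are linearly independent
and the units have maximal rank (`finiteIndex_of_close`).

For the signs, write `w_k` for the `k`-th vector, so that `Log w_k` has its large coordinate at
`k + 1` (mod `n`). In the chain `(1, w_{τ 0}, w_{τ 0} w_{τ 1}, …)` the row `τ t + 1` becomes large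
from column `t + 1` on, and the row for `t = m` never does. A term of the Leibniz expansion is
therefore dominant only if it has `m` large factors, and the unique such term matches row `τ t + 1`
with column `t + 1` (mod `n`): this is `c τ⁻¹ c⁻¹` with `c` the
cyclic shift, a permutation of sign `sign τ`. All other terms are smaller by a factor at least
`exp (M + M / m - 2 n m R)`, which beats the number `n!` of terms (`permSignCond_of_close`).
-/

noncomputable section

/-- The image in `F` of a unit of the ring of integers of `F`. -/
def uval (F : Type) [Field F] [NumberField F]
    (u : (NumberField.RingOfIntegers F)ˣ) : F :=
  algebraMap (NumberField.RingOfIntegers F) F (u : NumberField.RingOfIntegers F)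

/-- The embedding of `F` into `ℝ^n` given by the ordered real embeddings `σ`. -/
def emb (n : ℕ) (F : Type) [Field F] (σ : Fin n → (F →+* ℝ)) (x : F) :
    Fin n → ℝ := fun i => σ i x

/-- The group `E₊` of totally positive units of the ring of integers of `F`. -/
def totPosUnits (n : ℕ) (F : Type) [Field F] [NumberField F]
    (σ : Fin n → (F →+* ℝ)) : Subgroup (NumberField.RingOfIntegers F)ˣ where
  carrier := {u | ∀ i, 0 < σ i (uval F u)}
  one_mem' := by intro i; simp [uval]
  mul_mem' := by
    intro a b ha hb i
    have h : uval F (a * b) = uval F a * uval F b := by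
      simp [uval, Units.val_mul, map_mul]
    rw [h, map_mul]
    exact mul_pos (ha i) (hb i)
  inv_mem' := by
    intro a ha i
    have h : uval F a * uval F a⁻¹ = 1 := by
      simp [uval, ← map_mul, ← Units.val_mul]
    have h2 : σ i (uval F a) * σ i (uval F a⁻¹) = 1 := by
      rw [← map_mul, h, map_one]
    nlinarith [ha i, h2]

/-- Componentwise logarithm `Log : ℝ_{>0}^n → ℝ^n`. -/
def vlog (n : ℕ) (v : Fin n → ℝ) : Fin n → ℝ := fun i => Real.log (v i)

/-- The vector `l_i(M) ∈ ℝ^n` whose coordinate `i` (0-based) equals `M` and whose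
other coordinates all equal `−M/(n−1)`. -/
def lvec (n : ℕ) (M : ℝ) (i : ℕ) : Fin n → ℝ :=
  fun j => if (j : ℕ) = i then M else -M / ((n : ℝ) - 1)

/-- `δ(x₁,…,x_n)`: the sign of the determinant of the matrix with columns `x₁,…,x_n`. -/
def signdet (n : ℕ) (xs : Fin n → Fin n → ℝ) : ℝ :=
  Real.sign (Matrix.of fun j i : Fin n => xs i j).det

/-- The homogeneous chain `[x₁ | ⋯ | x_{n−1}] = (1, x₁, x₁x₂, …, x₁⋯x_{n−1})`,
products taken componentwise. -/
def chain (n : ℕ) (x : Fin (n - 1) → Fin n → ℝ) : Fin n → Fin n → ℝ :=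
  fun k j => ∏ t : Fin (n - 1), if (t : ℕ) < (k : ℕ) then x t j else 1

/-- The vector `π_H = (σ₁(π)⋯σ_n(π))^{−1/n}·(σ₁(π),…,σ_n(π))`. -/
def piH (n : ℕ) (F : Type) [Field F] (σ : Fin n → (F →+* ℝ)) (π : F) :
    Fin n → ℝ :=
  fun i => (∏ j, σ j π) ^ (-(1 : ℝ) / (n : ℝ)) * σ i π

/-- `gπ` belongs to the set `π_H·E₊ ⊂ ℝ_{>0}^n`. -/
def inPiHOrbit (n : ℕ) (F : Type) [Field F] [NumberField F]
    (σ : Fin n → (F →+* ℝ)) (π : F) (gπ : Fin n → ℝ) : Prop :=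
  ∃ ε : (NumberField.RingOfIntegers F)ˣ, ε ∈ totPosUnits n F σ ∧
    gπ = fun i => piH n F σ π i * σ i (uval F ε)

/-- The family `g₁,…,g_{n−1},g_n` of vectors in `ℝ^n`, where `g_n = g_π`. -/
def gfull (n : ℕ) (F : Type) [Field F] [NumberField F]
    (σ : Fin n → (F →+* ℝ)) (g : Fin (n - 1) → (NumberField.RingOfIntegers F)ˣ)
    (gπ : Fin n → ℝ) : Fin n → Fin n → ℝ :=
  fun k => if h : (k : ℕ) < n - 1 then emb n F σ (uval F (g ⟨(k : ℕ), h⟩)) else gπ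

/-- For every permutation `τ` of `{1,…,n}`,
`δ([w_{τ(1)} | ⋯ | w_{τ(n−1)}]) = sign(τ)`. -/
def permSignCond (n : ℕ) (w : Fin n → Fin n → ℝ) : Prop :=
  ∀ τ : Equiv.Perm (Fin n),
    signdet n (chain n (fun t => w (τ (Fin.castLE (Nat.sub_le n 1) t))))
      = ((Equiv.Perm.sign τ : ℤ) : ℝ)

/-! ### Signs of determinants with a dominant term -/

/-- If one term of the Leibniz expansion outweighs each of the other `N! - 1` terms by a factor
`N!`, the determinant has the sign of that term; here the heavy term is the diagonal one. -/
theorem det_exp_pos {N : ℕ} (b : Fin N → Fin N → ℝ)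
    (h : ∀ p : Equiv.Perm (Fin N), p ≠ 1 →
      ∑ i, b (p i) i + Real.log (N.factorial : ℝ) < ∑ i, b i i) :
    0 < (Matrix.of fun i j => Real.exp (b i j)).det := by
  have hN : (0 : ℝ) < N.factorial := by exact_mod_cast N.factorial_pos
  set S := ∑ i, b i i with hS
  have hterm : ∀ p : Equiv.Perm (Fin N),
      ∏ i, (Matrix.of fun i j => Real.exp (b i j)) (p i) i = Real.exp (∑ i, b (p i) i) := by
    intro p
    rw [Real.exp_sum]
    rfl
  rw [Matrix.det_apply, ← Finset.add_sum_erase _ _ (Finset.mem_univ (1 : Equiv.Perm (Fin N)))]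
  have h1 : ∀ p ∈ (Finset.univ : Finset (Equiv.Perm (Fin N))).erase 1,
      -(Real.exp S / N.factorial) ≤
        Equiv.Perm.sign p • ∏ i, (Matrix.of fun i j => Real.exp (b i j)) (p i) i := by
    intro p hp
    rw [hterm]
    have h2 : Real.exp (∑ i, b (p i) i) ≤ Real.exp S / N.factorial := by
      rw [le_div_iff₀ hN, ← Real.exp_log hN, ← Real.exp_add, Real.exp_le_exp]
      exact (h p (Finset.ne_of_mem_erase hp)).le
    have h3 := Real.exp_pos (∑ i, b (p i) i)
    rcases Int.units_eq_one_or (Equiv.Perm.sign p) with hs | hs <;> rw [hs]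
    · rw [one_smul]; linarith
    · rw [Units.neg_smul, one_smul]; linarith
  have h4 := Finset.card_nsmul_le_sum _ _ _ h1
  rw [Finset.card_erase_of_mem (Finset.mem_univ _), Finset.card_univ, Fintype.card_perm,
    Fintype.card_fin, nsmul_eq_mul, Nat.cast_sub N.factorial_pos] at h4
  have h5 : Equiv.Perm.sign (1 : Equiv.Perm (Fin N)) •
      ∏ i, (Matrix.of fun i j => Real.exp (b i j)) ((1 : Equiv.Perm (Fin N)) i) i
        = Real.exp S := by
    rw [hterm]; simp [hS]
  rw [h5]
  have h6 : ((N.factorial : ℝ) - (1 : ℕ)) * -(Real.exp S / N.factorial)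
      = -Real.exp S + Real.exp S / N.factorial := by
    field_simp; push_cast; ring
  have h7 : 0 < Real.exp S / N.factorial := by positivity
  linarith

/-- A permutation of `Fin N` without excedance is the identity, since `∑ p i = ∑ i`. -/
theorem exists_lt_apply_of_ne_one {N : ℕ} (p : Equiv.Perm (Fin N)) (hp : p ≠ 1) :
    ∃ i, i < p i := by
  by_contra! hcon
  apply hp
  have h1 : ∑ i, (p i : ℕ) = ∑ i : Fin N, (i : ℕ) := Equiv.sum_comp p (fun i => (i : ℕ))
  have h2 := (Finset.sum_eq_sum_iff_of_le (s := Finset.univ)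
    (fun i _ => Fin.le_def.mp (hcon i))).mp h1
  ext i
  exact h2 i (Finset.mem_univ i)

/-- Positivity for matrices whose logarithm is, up to column constants `a s` and a bounded
error, equal to a large `θ` on and above the diagonal (last column excepted) and `0` elsewhere. The
diagonal collects `θ` as often as possible; any other permutation has an index `i` with `i < p i`
(hence `i` is not the last one), and so loses at least one `θ`. -/
theorem det_exp_triangular_pos {m : ℕ} (b : Fin (m + 1) → Fin (m + 1) → ℝ)
    (a : Fin (m + 1) → ℝ) (θ ε : ℝ)
    (hθ : 2 * (m + 1) * ε + Real.log ((m + 1).factorial : ℝ) < θ)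
    (hb : ∀ t s, |b t s - (a s + if t ≤ s ∧ s ≠ Fin.last m then θ else 0)| ≤ ε) :
    0 < (Matrix.of fun i j => Real.exp (b i j)).det := by
  have hε : 0 ≤ ε := (abs_nonneg _).trans (hb 0 0)
  have hlog : 0 ≤ Real.log ((m + 1).factorial : ℝ) :=
    Real.log_nonneg (by exact_mod_cast (m + 1).factorial_pos)
  have hθ0 : 0 ≤ θ := by
    have : 0 ≤ 2 * ((m : ℝ) + 1) * ε := by positivity
    linarith
  apply det_exp_pos
  intro p hp
  obtain ⟨i₀, hi₀⟩ := exists_lt_apply_of_ne_one p hp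
  -- Each index loses at most `2ε` to the noise, and `i₀` gains the full `θ`.
  have hterm : ∀ i, (if i = i₀ then θ else 0) - 2 * ε ≤ b i i - b (p i) i := by
    intro i
    have h1 := abs_le.mp (hb i i)
    have h2 := abs_le.mp (hb (p i) i)
    have h3 : (if i = i₀ then θ else 0) ≤
        (if i ≤ i ∧ i ≠ Fin.last m then θ else 0)
          - (if p i ≤ i ∧ i ≠ Fin.last m then θ else 0) := by
      by_cases hi : i = i₀
      · subst hi
        have : i ≠ Fin.last m := (hi₀.trans_le (Fin.le_last _)).ne
        simp [this, not_le.mpr hi₀]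
      · by_cases hl : i = Fin.last m
        · rw [if_neg hi]
          simp [hl]
        · simp only [hi, hl, if_false, le_refl, ne_eq, not_false_eq_true, and_true, if_true]
          split_ifs <;> linarith
    linarith [h1.1, h2.2]
  have hsum := Finset.sum_le_sum (fun i (_ : i ∈ Finset.univ) => hterm i)
  rw [Finset.sum_sub_distrib, Finset.sum_sub_distrib] at hsum
  simp at hsum
  push_cast at hθ
  linarith

/-- The sign statement for vectors `w k` with `log (w k)` close to the vector whose large
coordinate is `k + 1` (cyclically). Relabelling the rows by `k ↦ finRotate (τ k)` and the columns by
`finRotate` costs exactly `sign τ` and brings the chain matrix into the shape covered by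
`det_exp_triangular_pos`. -/
theorem permSignCond_of_close {m : ℕ} (hm : 1 ≤ m) (w : Fin (m + 1) → Fin (m + 1) → ℝ)
    (hw : ∀ k j, 0 < w k j) {R M : ℝ} (hR : 0 < R)
    (hM : 2 * (m + 1) * (m * R) + Real.log ((m + 1).factorial : ℝ) < M)
    (h : ∀ k j, |Real.log (w k j) - if j = finRotate (m + 1) k then M else -M / m| < R) :
    permSignCond (m + 1) w := by
  intro τ
  have hm0 : (0 : ℝ) < m := by exact_mod_cast hm
  have hlog : 0 ≤ Real.log ((m + 1).factorial : ℝ) :=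
    Real.log_nonneg (by exact_mod_cast (m + 1).factorial_pos)
  have hM0 : 0 < M := by
    have : 0 ≤ 2 * ((m : ℝ) + 1) * (m * R) := by positivity
    linarith
  set c := finRotate (m + 1) with hc
  set x : Fin m → Fin (m + 1) → ℝ := fun t => w (τ t.castSucc) with hx
  let A : Matrix (Fin (m + 1)) (Fin (m + 1)) ℝ :=
    Matrix.of fun j i => chain (m + 1) x i j
  let b : Fin (m + 1) → Fin (m + 1) → ℝ := fun t s =>
    ∑ t' : Fin m, if (t' : ℕ) < (c s : ℕ) then Real.log (w (τ t'.castSucc) (c (τ t))) else 0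
  -- The entry `(c (τ t), c s)` of the chain matrix is the exponential of `b t s`.
  have hBA : (Matrix.of fun i j => Real.exp (b i j)) = (A.submatrix c c).submatrix τ id := by
    ext t s
    simp only [Matrix.of_apply, Matrix.submatrix_apply, b, A, chain, Real.exp_sum, id, hx]
    refine Finset.prod_congr rfl fun t' _ => ?_
    split_ifs
    · exact Real.exp_log (hw _ _)
    · exact Real.exp_zero
  have hcval : ∀ s : Fin (m + 1), (c s : ℕ) = if s = Fin.last m then 0 else (s : ℕ) + 1 :=
    fun s => coe_finRotate s
  have hpos : 0 < (Matrix.of fun i j => Real.exp (b i j)).det := by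
    apply det_exp_triangular_pos b
      (fun s => ∑ t' : Fin m, if (t' : ℕ) < (c s : ℕ) then -M / m else 0)
      (M + M / m) (m * R)
    · have : 0 < M / m := by positivity
      linarith
    · intro t s
      -- The large coordinate is hit by the factor `t' = t`, which is present iff `t < c s`.
      have hind : (if t ≤ s ∧ s ≠ Fin.last m then M + M / m else 0)
          = ∑ t' : Fin m, if t'.castSucc = t ∧ (t' : ℕ) < (c s : ℕ) then M + M / m else 0 := by
        by_cases hts : t ≤ s ∧ s ≠ Fin.last m
        · have htm : (t : ℕ) < m := by
            have h1 : (s : ℕ) < m := Fin.lt_def.mp (Fin.lt_last_iff_ne_last.mpr hts.2)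
            exact lt_of_le_of_lt (Fin.le_def.mp hts.1) h1
          rw [if_pos hts, Finset.sum_eq_single (⟨t, htm⟩ : Fin m)]
          · rw [if_pos]
            refine ⟨rfl, ?_⟩
            rw [hcval, if_neg hts.2]
            exact Nat.lt_succ_of_le hts.1
          · intro t' _ hne
            rw [if_neg]
            rintro ⟨rfl, -⟩
            exact hne rfl
          · simp
        · rw [if_neg hts, Finset.sum_eq_zero]
          intro t' _
          rw [if_neg]
          rintro ⟨rfl, h2⟩
          apply hts
          rw [hcval] at h2
          split_ifs at h2 with h3
          · omega
          · exact ⟨Fin.le_def.mpr (Nat.lt_succ_iff.mp h2), h3⟩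
      rw [hind, ← Finset.sum_add_distrib, ← Finset.sum_sub_distrib]
      refine (Finset.abs_sum_le_sum_abs _ _).trans ?_
      have : ∀ t' ∈ (Finset.univ : Finset (Fin m)),
          |(if (t' : ℕ) < (c s : ℕ) then Real.log (w (τ t'.castSucc) (c (τ t))) else 0)
            - ((if (t' : ℕ) < (c s : ℕ) then -M / m else 0)
              + if t'.castSucc = t ∧ (t' : ℕ) < (c s : ℕ) then M + M / m else 0)| ≤ R := by
        intro t' _
        by_cases h1 : (t' : ℕ) < (c s : ℕ)
        · have h2 := h (τ t'.castSucc) (c (τ t))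
          simp only [h1, if_true, and_true]
          by_cases h3 : t'.castSucc = t
          · rw [if_pos (by rw [h3])] at h2
            rw [if_pos h3]
            have : -M / m + (M + M / m) = M := by ring
            rw [this]; exact h2.le
          · rw [if_neg (by simpa using fun h' => h3 h'.symm)] at h2
            rw [if_neg h3, add_zero]; exact h2.le
        · simp [h1, hR.le]
      refine (Finset.sum_le_card_nsmul _ _ _ this).trans ?_
      simp
  rw [hBA, Matrix.det_permute, Matrix.det_submatrix_equiv_self] at hpos
  change Real.sign A.det = _
  rcases Int.units_eq_one_or (Equiv.Perm.sign τ) with hs | hs <;> rw [hs] at hpos ⊢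
  · have : 0 < A.det := by simpa using hpos
    simp [Real.sign_of_pos this]
  · have : A.det < 0 := by simpa using hpos
    simp [Real.sign_of_neg this]

/-! ### Logarithms of totally positive units -/

open NumberField NumberField.Units NumberField.Units.dirichletUnitTheorem in
/-- The `n` real embeddings give `n` distinct infinite places; a field of degree `n` has at most
`n` of them, so these are all the infinite places, and every one is real. -/
theorem exists_placeEquiv {n : ℕ} {F : Type} [Field F] [NumberField F]
    (hdeg : Module.finrank ℚ F = n) (σ : Fin n → (F →+* ℝ)) (hinj : Function.Injective σ) :
    ∃ e : Fin n ≃ InfinitePlace F,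
      (∀ i x, e i x = |σ i x|) ∧ ∀ i, (e i).mult = 1 := by
  classical
  let f : Fin n → InfinitePlace F := fun i => InfinitePlace.mk (Complex.ofRealHom.comp (σ i))
  have hreal : ∀ i, ComplexEmbedding.IsReal (Complex.ofRealHom.comp (σ i)) := by
    intro i
    ext x
    simp
  have hf : Function.Injective f := by
    intro i j hij
    apply hinj
    rw [InfinitePlace.mk_eq_iff, ComplexEmbedding.isReal_iff.mp (hreal i), or_self] at hij
    ext x
    have := RingHom.congr_fun hij x
    simpa using this
  have hcard : Fintype.card (InfinitePlace F) ≤ n := by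
    have h1 := InfinitePlace.card_add_two_mul_card_eq_rank F
    have h2 := InfinitePlace.card_eq_nrRealPlaces_add_nrComplexPlaces F
    omega
  have hbij : Function.Bijective f := by
    rw [Fintype.bijective_iff_injective_and_card]
    refine ⟨hf, le_antisymm (Fintype.card_le_of_injective f hf) ?_⟩
    simpa using hcard
  refine ⟨Equiv.ofBijective f hbij, fun i x => ?_, fun i => ?_⟩
  · change f i x = _
    simp [f, InfinitePlace.apply]
  · change (f i).mult = 1
    exact InfinitePlace.mult_isReal ⟨f i, InfinitePlace.isReal_mk_iff.mpr (hreal i)⟩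

section Units

variable {n : ℕ} {F : Type} [Field F] [NumberField F] (σ : Fin n → (F →+* ℝ))
  (e : Fin n ≃ NumberField.InfinitePlace F) (he : ∀ i x, e i x = |σ i x|)
  (hmult : ∀ i, (e i).mult = 1)

include he hmult

open NumberField NumberField.Units NumberField.Units.dirichletUnitTheorem in
theorem logEmbedding_apply_place (u : (𝓞 F)ˣ) (i : Fin n) (hi : e i ≠ w₀) :
    logEmbedding F (Additive.ofMul u) ⟨e i, hi⟩ = Real.log (σ i (uval F u)) := by
  rw [logEmbedding_component, hmult, he, Real.log_abs, Nat.cast_one, one_mul]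
  rfl

theorem sum_log_unit (u : (NumberField.RingOfIntegers F)ˣ) :
    ∑ i, Real.log (σ i (uval F u)) = 0 := by
  rw [← NumberField.Units.sum_mult_mul_log u, ← Equiv.sum_comp e]
  refine Finset.sum_congr rfl fun i _ => ?_
  rw [hmult, he, Real.log_abs, Nat.cast_one, one_mul]
  rfl

open NumberField NumberField.Units NumberField.Units.dirichletUnitTheorem in
/-- Cocompactness of the unit lattice, coordinatewise: units approximate any vector up to a
uniform error in all coordinates except the one of the distinguished place `w₀`. -/
theorem exists_unit_near_aux : ∃ D : ℝ, 0 ≤ D ∧ ∀ v : Fin n → ℝ,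
    ∃ u : (𝓞 F)ˣ, ∀ i, e i ≠ w₀ → |Real.log (σ i (uval F u)) - v i| ≤ D := by
  classical
  let b := (basisUnitLattice F).ofZLatticeBasis ℝ (unitLattice F)
  refine ⟨∑ i, ‖b i‖, by positivity, fun v => ?_⟩
  let x : logSpace F := fun w => v (e.symm w)
  have hmem : (ZSpan.floor b x : logSpace F) ∈ unitLattice F := by
    exact (Module.Basis.ofZLatticeBasis_span ℝ (unitLattice F) (basisUnitLattice F)).le
      (ZSpan.floor b x).2
  obtain ⟨u, -, hu⟩ := Submodule.mem_map.mp hmem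
  refine ⟨u.toMul, fun i hi => ?_⟩
  have h2 := ZSpan.norm_fract_le (K := ℝ) b x
  have h3 := (norm_le_pi_norm (ZSpan.fract b x) ⟨e i, hi⟩).trans h2
  rw [ZSpan.fract_apply, ← hu, Pi.sub_apply] at h3
  change ‖x ⟨e i, hi⟩ - logEmbedding F (Additive.ofMul u.toMul) ⟨e i, hi⟩‖ ≤ _ at h3
  rw [logEmbedding_apply_place σ e he hmult, norm_sub_rev, Real.norm_eq_abs] at h3
  simpa [x] using h3

open NumberField NumberField.Units NumberField.Units.dirichletUnitTheorem in
/-- The vectors `Log u`, for `u` a totally positive unit, are uniformly dense in the zero-sum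
hyperplane. Squares of units are totally positive, so half of the target is approximated and
the result squared. -/
theorem exists_totPosUnit_near (hn : 0 < n) : ∃ C : ℝ, 0 ≤ C ∧ ∀ v : Fin n → ℝ, ∑ i, v i = 0 →
    ∃ u ∈ totPosUnits n F σ, ∀ i, |Real.log (σ i (uval F u)) - v i| ≤ C := by
  obtain ⟨D, hD, h⟩ := exists_unit_near_aux σ e he hmult
  refine ⟨n * (2 * D), by positivity, fun v hv => ?_⟩
  obtain ⟨u, hu⟩ := h (fun i => v i / 2)
  have hsq : ∀ i, σ i (uval F (u ^ 2)) = σ i (uval F u) ^ 2 := by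
    intro i; simp [uval]
  have hne : ∀ i, σ i (uval F u) ≠ 0 := by
    intro i; simp [uval]
  have hclose : ∀ i, e i ≠ w₀ → |Real.log (σ i (uval F (u ^ 2))) - v i| ≤ 2 * D := by
    intro i hi
    have := abs_le.mp (hu i hi)
    rw [hsq, Real.log_pow, abs_le]
    push_cast
    constructor <;> linarith [this.1, this.2]
  refine ⟨u ^ 2, fun i => ?_, fun i => ?_⟩
  · rw [hsq]; exact sq_pos_iff.mpr (hne i)
  · by_cases hi : e i = w₀
    · -- The coordinate missing from the log space is recovered from the zero-sum relation.
      have hs := sum_log_unit σ e he hmult (u ^ 2)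
      have hd : ∑ j, (Real.log (σ j (uval F (u ^ 2))) - v j) = 0 := by
        rw [Finset.sum_sub_distrib, hs, hv, sub_zero]
      rw [← Finset.add_sum_erase _ _ (Finset.mem_univ i), add_eq_zero_iff_eq_neg] at hd
      rw [hd, abs_neg]
      refine (Finset.abs_sum_le_sum_abs _ _).trans ?_
      refine (Finset.sum_le_card_nsmul _ _ (2 * D) ?_).trans ?_
      · intro j hj
        refine hclose j fun hj' => Finset.ne_of_mem_erase hj ?_
        exact e.injective (hj'.trans hi.symm)
      · rw [nsmul_eq_mul]
        gcongr
        simp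
    · refine (hclose i hi).trans ?_
      have : (1 : ℝ) ≤ n := by exact_mod_cast hn
      nlinarith

end Units

open NumberField NumberField.Units NumberField.Units.dirichletUnitTheorem in
/-- Totally positive units `g t` whose logarithms are close to the vectors with large coordinate
`t + 1` have linearly independent logarithms, because the matrix of the coordinates `1, …, m` is
strictly diagonally dominant; hence they generate a subgroup of finite index. -/
theorem finiteIndex_of_close {m : ℕ} (hm : 1 ≤ m) {F : Type} [Field F] [NumberField F]
    (σ : Fin (m + 1) → (F →+* ℝ))
    (e : Fin (m + 1) ≃ NumberField.InfinitePlace F) (he : ∀ i x, e i x = |σ i x|)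
    (hmult : ∀ i, (e i).mult = 1) (g : Fin m → totPosUnits (m + 1) F σ)
    {R M : ℝ} (hR : 0 < R) (hM : m * (m * R) < M)
    (h : ∀ (t : Fin m) (j : Fin (m + 1)), |Real.log (σ j (uval F (g t)))
      - if j = t.succ then M else -M / m| < R) :
    (Subgroup.closure (Set.range g)).FiniteIndex := by
  classical
  have hm0 : (0 : ℝ) < m := by exact_mod_cast hm
  have hM0 : 0 < M := by
    have : 0 ≤ (m : ℝ) * (m * R) := by positivity
    linarith
  let A : Matrix (Fin m) (Fin m) ℝ := Matrix.of fun t s => Real.log (σ s.succ (uval F (g t)))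
  have hdet : A.det ≠ 0 := by
    apply det_ne_zero_of_sum_row_lt_diag
    intro t
    have hoff : ∀ s ∈ Finset.univ.erase t, ‖A t s‖ ≤ M / m + R := by
      intro s hs
      have h1 := h t s.succ
      rw [if_neg (by simpa using Finset.ne_of_mem_erase hs)] at h1
      have h2 := abs_lt.mp h1
      have h3 : -M / m = -(M / m) := by ring
      have h4 : 0 < M / m := by positivity
      rw [h3] at h2
      rw [Real.norm_eq_abs, abs_le]
      constructor <;> simp only [A, Matrix.of_apply] <;> linarith [h2.1, h2.2]
    have hdiag : M - R < ‖A t t‖ := by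
      have h1 := h t t.succ
      rw [if_pos rfl] at h1
      have h2 := abs_lt.mp h1
      exact lt_of_lt_of_le (by simp only [A, Matrix.of_apply]; linarith [h2.1]) (le_abs_self _)
    refine lt_of_le_of_lt ((Finset.sum_le_card_nsmul _ _ _ hoff).trans (le_of_eq ?_))
      (lt_trans (b := M - R) ?_ hdiag) (b := ((m : ℝ) - 1) * (M / m + R))
    · rw [Finset.card_erase_of_mem (Finset.mem_univ _), Finset.card_univ, Fintype.card_fin,
        nsmul_eq_mul, Nat.cast_sub hm, Nat.cast_one]
    · have h5 : m * R < M / m := by rw [lt_div_iff₀ hm0]; linarith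
      have h6 : (m : ℝ) * (M / m) = M := by field_simp
      nlinarith
  have hrank : Units.rank F = m := by
    rw [Units.rank, ← Fintype.card_congr e, Fintype.card_fin, Nat.add_sub_cancel]
  have hmax : IsMaxRank (fun t : Fin (Units.rank F) => (g (Fin.cast hrank t) : (𝓞 F)ˣ)) := by
    have hlin : LinearIndependent ℝ
        (fun t : Fin m => logEmbedding F (Additive.ofMul (g t : (𝓞 F)ˣ))) := by
      rw [Fintype.linearIndependent_iff]
      intro a ha
      have hne : ∀ i, e i ≠ w₀ → ∑ t, a t * Real.log (σ i (uval F (g t))) = 0 := by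
        intro i hi
        have := congrFun ha ⟨e i, hi⟩
        simpa [Finset.sum_apply, logEmbedding_apply_place σ e he hmult] using this
      have hall : ∀ i, ∑ t, a t * Real.log (σ i (uval F (g t))) = 0 := by
        intro i
        by_cases hi : e i = w₀
        -- The coordinate at `w₀` is minus the sum of the others.
        · have h1 : ∑ i, ∑ t, a t * Real.log (σ i (uval F (g t))) = 0 := by
            rw [Finset.sum_comm]
            refine Finset.sum_eq_zero fun t _ => ?_
            rw [← Finset.mul_sum, sum_log_unit σ e he hmult, mul_zero]
          rw [← Finset.add_sum_erase _ _ (Finset.mem_univ i)] at h1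
          have h2 : ∑ j ∈ Finset.univ.erase i,
              ∑ t, a t * Real.log (σ j (uval F (g t))) = 0 := by
            refine Finset.sum_eq_zero fun j hj => ?_
            exact hne j fun hj' => Finset.ne_of_mem_erase hj (e.injective (hj'.trans hi.symm))
          rwa [h2, add_zero] at h1
        · exact hne i hi
      have hz : Matrix.vecMul a A = 0 := by
        ext s
        exact hall s.succ
      exact congrFun (Matrix.eq_zero_of_vecMul_eq_zero hdet hz)
    exact hlin.comp _ (Fin.cast_injective hrank)
  have hfin := isMaxRank_iff_closure_finiteIndex.mp hmax
  have hrange : Set.range (fun t : Fin (Units.rank F) => (g (Fin.cast hrank t) : (𝓞 F)ˣ))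
      = (totPosUnits (m + 1) F σ).subtype '' Set.range g := by
    rw [← Set.range_comp]
    exact (finCongr hrank).surjective.range_comp (fun t => (g t : (𝓞 F)ˣ))
  rw [hrange, ← MonoidHom.map_closure] at hfin
  have h2 : (((Subgroup.closure (Set.range g)).map
      (totPosUnits (m + 1) F σ).subtype).subgroupOf (totPosUnits (m + 1) F σ)).FiniteIndex :=
    inferInstance
  rwa [Subgroup.subgroupOf, Subgroup.comap_map_eq_self_of_injective
    (Subgroup.subtype_injective _)] at h2

/-- `π_H` has norm one, so `Log π_H` lies in the zero-sum hyperplane. -/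
theorem sum_log_piH {n : ℕ} (hn : 0 < n) {F : Type} [Field F] (σ : Fin n → (F →+* ℝ)) (π : F)
    (hπ : ∀ i, 0 < σ i π) : ∑ i, Real.log (piH n F σ π i) = 0 := by
  have hn0 : (n : ℝ) ≠ 0 := by exact_mod_cast hn.ne'
  have hP : 0 < ∏ j, σ j π := Finset.prod_pos fun j _ => hπ j
  have h1 : ∀ i, Real.log (piH n F σ π i)
      = -1 / n * Real.log (∏ j, σ j π) + Real.log (σ i π) := by
    intro i
    rw [piH, Real.log_mul (Real.rpow_pos_of_pos hP _).ne' (hπ i).ne', Real.log_rpow hP]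
  simp_rw [h1, Finset.sum_add_distrib]
  rw [Real.log_prod (fun j _ => (hπ j).ne')]
  simp
  field_simp
  ring

/-! ### Proof of the theorem -/

/-- existence of `R₁ > 0` and `K₁ : ℝ → ℝ` such that for all `R > R₁` and
`M > K₁(R)`: (0) there exist `g₁,…,g_{n−1} ∈ E₊` and `g_π ∈ π_H·E₊` with
`‖Log gᵢ − l_i(M)‖_∞ < R` and `‖Log g_π − l_0(M)‖_∞ < R`; and (i)–(ii) for any such
choice, `⟨g₁,…,g_{n−1}⟩` has finite index in `E₊` and, writing `g_n = g_π`,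
`δ([g_{τ(1)} | ⋯ | g_{τ(n−1)}]) = sign(τ)` for every permutation `τ` of `{1,…,n}`. -/
theorem statement0
    (n : ℕ) (hn : 2 ≤ n)
    (F : Type) [Field F] [NumberField F]
    (hdeg : Module.finrank ℚ F = n)
    (σ : Fin n → (F →+* ℝ))
    (hinj : Function.Injective σ)
    (hsurj : ∀ φ : F →+* ℝ, ∃ i, σ i = φ)
    (π : F) (hπ : ∀ i, 0 < σ i π) :
    ∃ R₁ : ℝ, 0 < R₁ ∧ ∃ K₁ : ℝ → ℝ,
      ∀ R M : ℝ, R₁ < R → K₁ R < M →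
        ((∃ (g : Fin (n - 1) → totPosUnits n F σ) (gπ : Fin n → ℝ),
            inPiHOrbit n F σ π gπ ∧
            (∀ t : Fin (n - 1),
              ‖vlog n (emb n F σ (uval F ↑(g t))) - lvec n M ((t : ℕ) + 1)‖ < R) ∧
            ‖vlog n gπ - lvec n M 0‖ < R) ∧
          ∀ (g : Fin (n - 1) → totPosUnits n F σ) (gπ : Fin n → ℝ),
            inPiHOrbit n F σ π gπ →
            (∀ t : Fin (n - 1),
              ‖vlog n (emb n F σ (uval F ↑(g t))) - lvec n M ((t : ℕ) + 1)‖ < R) →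
            ‖vlog n gπ - lvec n M 0‖ < R →
            (Subgroup.closure (Set.range g)).FiniteIndex ∧
            permSignCond n (gfull n F σ (fun t => ↑(g t)) gπ)) := by
  classical
  obtain ⟨m, rfl⟩ : ∃ m, n = m + 1 := ⟨n - 1, by omega⟩
  have hm : 1 ≤ m := by omega
  have hm0 : (0 : ℝ) < m := by exact_mod_cast hm
  obtain ⟨e, he, hmult⟩ := exists_placeEquiv hdeg σ hinj
  obtain ⟨C, hC, hnear⟩ := exists_totPosUnit_near σ e he hmult (Nat.succ_pos m)
  have hlog : 0 ≤ Real.log ((m + 1).factorial : ℝ) :=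
    Real.log_nonneg (by exact_mod_cast (m + 1).factorial_pos)
  have hpiH : ∀ i, 0 < piH (m + 1) F σ π i := fun i =>
    mul_pos (Real.rpow_pos_of_pos (Finset.prod_pos fun j _ => hπ j) _) (hπ i)
  have hlv : ∀ (M : ℝ) (i : ℕ) (j : Fin (m + 1)), lvec (m + 1) M i j
      = if (j : ℕ) = i then M else -M / m := by
    intro M i j
    simp [lvec]
  refine ⟨C + 1, by linarith,
    fun R => 2 * (m + 1) * (m * R) + Real.log ((m + 1).factorial : ℝ), fun R M hR hM => ?_⟩
  have hR0 : 0 < R := by linarith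
  refine ⟨?_, ?_⟩
  · have hl : ∀ i : Fin (m + 1), ∑ j, lvec (m + 1) M i j = 0 := by
      intro i
      simp_rw [hlv]
      rw [← Finset.add_sum_erase _ _ (Finset.mem_univ i), if_pos rfl,
        Finset.sum_congr rfl (g := fun _ => -M / (m : ℝ)) fun j hj => if_neg
          fun h => Finset.ne_of_mem_erase hj (Fin.ext h)]
      rw [Finset.sum_const, Finset.card_erase_of_mem (Finset.mem_univ _), Finset.card_univ,
        Fintype.card_fin, nsmul_eq_mul, Nat.add_sub_cancel]
      field_simp
      ring
    -- The bound `C` is independent of the target, hence of `M`.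
    choose u hu hu' using fun t : Fin m => hnear _ (hl t.succ)
    obtain ⟨ε, hε, hε'⟩ := hnear
      (fun j => lvec (m + 1) M 0 j - Real.log (piH (m + 1) F σ π j)) (by
        rw [Finset.sum_sub_distrib, sum_log_piH (Nat.succ_pos m) σ π hπ, sub_zero]
        exact hl 0)
    refine ⟨fun t => ⟨u t, hu t⟩, fun i => piH (m + 1) F σ π i * σ i (uval F ε),
      ⟨ε, hε, rfl⟩, fun t => ?_, ?_⟩
    · refine (pi_norm_lt_iff hR0).mpr fun j => ?_
      exact lt_of_le_of_lt (hu' t j) (by linarith)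
    · refine (pi_norm_lt_iff hR0).mpr fun j => ?_
      refine lt_of_le_of_lt (le_of_eq_of_le ?_ (hε' j)) (by linarith)
      rw [Pi.sub_apply, vlog, Real.log_mul (hpiH j).ne' (hε j).ne', Real.norm_eq_abs]
      congr 1
      ring
  · intro g gπ hgπ hg hπ'
    have hg' : ∀ (t : Fin m) (j : Fin (m + 1)), |Real.log (σ j (uval F (g t)))
        - if j = t.succ then M else -M / m| < R := by
      intro t j
      have h1 := (pi_norm_lt_iff hR0).mp (hg t) j
      rw [Pi.sub_apply, hlv, Real.norm_eq_abs] at h1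
      simpa [vlog, emb, Fin.ext_iff] using h1
    refine ⟨finiteIndex_of_close hm σ e he hmult g hR0 ?_ hg', ?_⟩
    · have : (m : ℝ) * (m * R) ≤ 2 * (m + 1) * (m * R) := by
        gcongr
        linarith
      linarith
    · apply permSignCond_of_close hm _ ?_ hR0 hM
      · intro k j
        refine Fin.lastCases ?_ (fun t => ?_) k
        · have h1 : gfull (m + 1) F σ (fun t => ↑(g t)) gπ (Fin.last m) = gπ := by
            simp [gfull]
          rw [h1, finRotate_last]
          have h2 := (pi_norm_lt_iff hR0).mp hπ' j
          rw [Pi.sub_apply, hlv, Real.norm_eq_abs] at h2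
          have h3 : j = 0 ↔ (j : ℕ) = 0 := Fin.ext_iff
          simp only [h3]
          exact h2
        · have h1 : gfull (m + 1) F σ (fun t => ↑(g t)) gπ t.castSucc
              = emb (m + 1) F σ (uval F (g t)) := by
            simp [gfull]
          rw [h1, show finRotate (m + 1) t.castSucc = t.succ from finRotate_of_lt t.2]
          exact hg' t j
      · intro k j
        refine Fin.lastCases ?_ (fun t => ?_) k
        · obtain ⟨ε, hε, rfl⟩ := hgπ
          simpa [gfull] using mul_pos (hpiH j) (hε j)
        · simpa [gfull, emb] using (g t).2 j

end
end

section
/- Let n ≥ 2 be an integer, F a totally real number field of degree n embedded in ℝ^n via a fixed ordering of its real embeddings, 𝔣 a nonzero ideal of O_F, and E₊(𝔣) the group of totally positive units of O_F congruent to 1 modulo 𝔣. Let α be, up to sign, one of the standard basis vectors of ℝ^n. Let ε₁,…,ε_{n−1} ∈ E₊(𝔣) be such that V = ⟨ε₁,…,ε_{n−1}⟩ has finite index in E₊(𝔣), and suppose that for every permutation τ of {1,…,n−1} one has δ([ε_{τ(1)} | ⋯ | ε_{τ(n−1)}]) = sign(τ). Then the set D = ⋃_{τ ∈ S_{n−1}}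 C̄_α([ε_{τ(1)} | ⋯ | ε_{τ(n−1)}]) is a fundamental domain for the action of V on ℝ_{>0}^n by componentwise multiplication; that is, ℝ_{>0}^n is the disjoint union of the sets εD over ε ∈ V. -/
/-!
Write `n = N + 1`, and `ε^m` for `ε₁^{m₁} ⋯ ε_N^{m_N}` with `m ∈ ℤ^N`.  The translates of the cones
in `D` by `V` are the cones `C(m, τ)` over the images under `m ↦ ε^m` of the simplices of the
Freudenthal–Kuhn triangulation of `ℝ^N`.  The simplex `(m, τ)` has vertices `path m τ k`.  Since
the half-open cones with given `m` make up `ε^m D` (`mem_scaleSet_iff`), it suffices that they lie in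
the positive orthant (`cbar_pos`) and that each positive point lies in exactly one of them.

The heart is a degree computation, `count_eq_one_or`: for a generic positive `y` the number of cones
containing `y`, counted with the orientation of the cones and of the triangulation, is `±1`.  It
holds for any positive vertex map `V` whose logarithm stays at bounded distance from a linear map
`m ↦ ∑ m_k ℓ_k` with `ℓ_k` independent modulo `(1, …, 1)` (`LogIndep`), and is proved by induction
on `N`.  By the cocycle relation for signed indicator functions of cones (`sind_cocycle`), a cone may
be replaced by the cones joining its facets to a basis vector `e_j`.  In the sum over all simplices
between the hyperplanes `m 0 = -A` and `m 0 = A` the facets inside cancel in pairs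
(`slab_boundary`), which leaves the two layers at the ends (`count_eq_layers`).  For a suitable `j`,
at large `A` one of them lies above `y` in direction `e_j` and the other one below (`layer_height`).
The first contributes `0`, and the second contributes, up to sign, the count of the configuration
projected along `e_j`, in one dimension less (`layer_above`, `layer_below`).

For the units, the independence of the logarithms comes from Dirichlet's unit theorem
(`logIndep_units`), and the hypothesis on the signs of the determinants makes every term of the count
nonnegative, so that a generic point lies in exactly one open cone (`existsUnique_generic`).  Since
`α` lies on no wall of a cone (`single_ne_sum`, an argument with the trace form), membership of `x` in
`C̄_α` agrees with membership in the open cone of any point close enough to `x + h α`, for small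
`h > 0` (`cbar_stable`).  Choosing a generic such point (`dense_generic`), one obtains the partition
of the positive orthant into half-open cones (`existsUnique_cbar`).
-/

noncomputable section

/-- The group `E₊(𝔣)` of totally positive units of `O_F` congruent to `1` modulo the
ideal `𝔣`. -/
def totPosUnitsMod (n : ℕ) (F : Type) [Field F] [NumberField F]
    (σ : Fin n → (F →+* ℝ)) (𝔣 : Ideal (NumberField.RingOfIntegers F)) :
    Subgroup (NumberField.RingOfIntegers F)ˣ where
  carrier := {u | (∀ i, 0 < σ i (uval F u)) ∧
    ((u : NumberField.RingOfIntegers F) - 1 ∈ 𝔣)}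
  one_mem' := ⟨by intro i; simp [uval], by simp⟩
  mul_mem' := by
    rintro a b ⟨ha, ha'⟩ ⟨hb, hb'⟩
    refine ⟨fun i => ?_, ?_⟩
    · have h : uval F (a * b) = uval F a * uval F b := by
        simp [uval, Units.val_mul, map_mul]
      rw [h, map_mul]
      exact mul_pos (ha i) (hb i)
    · have key : ((a * b : (NumberField.RingOfIntegers F)ˣ) :
          NumberField.RingOfIntegers F) - 1
          = (a : NumberField.RingOfIntegers F) *
              ((b : NumberField.RingOfIntegers F) - 1) +
            ((a : NumberField.RingOfIntegers F) - 1) := by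
        rw [Units.val_mul]; ring
      rw [key]
      exact Ideal.add_mem _ (Ideal.mul_mem_left _ _ hb') ha'
  inv_mem' := by
    rintro a ⟨ha, ha'⟩
    refine ⟨fun i => ?_, ?_⟩
    · have h : uval F a * uval F a⁻¹ = 1 := by
        simp [uval, ← map_mul, ← Units.val_mul]
      have h2 : σ i (uval F a) * σ i (uval F a⁻¹) = 1 := by
        rw [← map_mul, h, map_one]
      nlinarith [ha i, h2]
    · have h1 : ((a⁻¹ : (NumberField.RingOfIntegers F)ˣ) :
          NumberField.RingOfIntegers F) * (a : NumberField.RingOfIntegers F) = 1 :=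
        Units.inv_mul a
      have key : ((a⁻¹ : (NumberField.RingOfIntegers F)ˣ) :
          NumberField.RingOfIntegers F) - 1
          = ((a⁻¹ : (NumberField.RingOfIntegers F)ˣ) :
              NumberField.RingOfIntegers F) *
            (1 - (a : NumberField.RingOfIntegers F)) := by
        rw [mul_sub, mul_one, h1]
      rw [key]
      refine Ideal.mul_mem_left _ _ ?_
      simpa using 𝔣.neg_mem ha'

/-- The open simplicial cone `C(v₁,…,v_m) = {c₁v₁ + ⋯ + c_mv_m : cᵢ > 0}`. -/
def openCone (n m : ℕ) (v : Fin m → Fin n → ℝ) : Set (Fin n → ℝ) :=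
  {y | ∃ c : Fin m → ℝ, (∀ t, 0 < c t) ∧ y = ∑ t, c t • v t}

/-- `C̄_α(v₁,…,v_n)`: the set of `x` such that `x + hα ∈ C(v₁,…,v_n)` for all
sufficiently small `h > 0`. -/
def cbar (n : ℕ) (α : Fin n → ℝ) (v : Fin n → Fin n → ℝ) : Set (Fin n → ℝ) :=
  {x | ∃ h₀ : ℝ, 0 < h₀ ∧ ∀ h : ℝ, 0 < h → h < h₀ → x + h • α ∈ openCone n n v}

/-- The set `xD`, the image of `D ⊆ ℝ^n` under componentwise multiplication by the
image of `x ∈ F` in `ℝ^n`. -/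
def scaleSet (n : ℕ) (F : Type) [Field F] (σ : Fin n → (F →+* ℝ)) (x : F)
    (D : Set (Fin n → ℝ)) : Set (Fin n → ℝ) :=
  (fun y => fun i => σ i x * y i) '' D

/-! ### Signed indicator functions of simplicial cones -/

/-- The line `t ↦ a + t d` crosses the rising coordinates (`d k > 0`) last at `p` and the falling
ones first at `q`.  If all other coordinates are positive at the crossing of `p`, the same holds at
the crossing of `q`. -/
lemma crossing_transfer {ι : Type*} (a d : ι → ℝ)
    (hgen : ∀ p q, p ≠ q → ∀ t, ¬ (a p + t * d p = 0 ∧ a q + t * d q = 0))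
    {p q : ι} (hp : 0 < d p) (hq : d q < 0)
    (hpmax : ∀ k, 0 < d k → - (a k / d k) ≤ - (a p / d p))
    (hqmin : ∀ k, d k < 0 → - (a q / d q) ≤ - (a k / d k))
    (h : ∀ k, k ≠ p → 0 < a k - a p / d p * d k) :
    ∀ k, k ≠ q → 0 < a k - a q / d q * d k := by
  intro k hk
  have hpq : q ≠ p := by rintro rfl; linarith
  have h1 := h q hpq
  have h2 : - (a p / d p) < - (a q / d q) := by
    have : a q = a q / d q * d q := (div_mul_cancel₀ _ hq.ne).symm
    rw [this] at h1
    have h3 : 0 < (a q / d q - a p / d p) * d q := by linarith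
    nlinarith
  rcases lt_trichotomy (d k) 0 with hd | hd | hd
  · have h3 := hqmin k hd
    have e : a k = a k / d k * d k := (div_mul_cancel₀ _ hd.ne).symm
    have h4 : a k / d k ≠ a q / d q := by
      intro he
      refine hgen k q hk (-(a q / d q)) ⟨?_, ?_⟩
      · rw [← he, neg_mul, div_mul_cancel₀ _ hd.ne, add_neg_cancel]
      · rw [neg_mul, div_mul_cancel₀ _ hq.ne, add_neg_cancel]
    have h5 : a k / d k - a q / d q < 0 := lt_of_le_of_ne (by linarith) (sub_ne_zero.2 h4)
    rw [e]
    nlinarith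
  · have : k ≠ p := by rintro rfl; linarith
    have := h k this
    simp only [hd, mul_zero] at this ⊢
    exact this
  · have h3 := hpmax k hd
    have e : a k = a k / d k * d k := (div_mul_cancel₀ _ hd.ne').symm
    rw [e]
    nlinarith

open Classical Finset in
/-- A generic affine line `t ↦ a + t d` that is outside the positive orthant at both ends either
misses it, or enters it through one coordinate hyperplane and leaves it through another: the two
crossings, counted with the sign of `d`, cancel.  The crossing of the `i`-th hyperplane is at
`t = -a i / d i`; indices with `d i = 0` contribute nothing, as `sign 0 = 0`. -/
lemma sum_crossings {ι : Type*} [Fintype ι] (a d : ι → ℝ)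
    (hgen : ∀ p q, p ≠ q → ∀ t, ¬ (a p + t * d p = 0 ∧ a q + t * d q = 0))
    (hpos : ∃ i, 0 < d i) (hneg : ∃ i, d i < 0) :
    ∑ i, (if ∀ k, k ≠ i → 0 < a k - a i / d i * d k then (SignType.sign (d i) : ℤ) else 0) = 0 := by
  obtain ⟨i₀, hi₀⟩ := hpos
  obtain ⟨i₁, hi₁⟩ := hneg
  obtain ⟨p, hp, hpmax⟩ := exists_max_image (univ.filter fun i => 0 < d i)
    (fun i => - (a i / d i)) ⟨i₀, by simpa using hi₀⟩
  obtain ⟨q, hq, hqmin⟩ := exists_min_image (univ.filter fun i => d i < 0)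
    (fun i => - (a i / d i)) ⟨i₁, by simpa using hi₁⟩
  simp only [mem_filter, mem_univ, true_and] at hp hq hpmax hqmin
  have hpq : p ≠ q := by rintro rfl; linarith
  rw [← sum_subset (subset_univ {p, q}), sum_pair hpq]
  · have hiff : (∀ k, k ≠ p → 0 < a k - a p / d p * d k) ↔
        (∀ k, k ≠ q → 0 < a k - a q / d q * d k) := by
      constructor
      · exact crossing_transfer a d hgen hp hq hpmax hqmin
      · have := crossing_transfer a (fun i => - d i)
          (fun p q h t => by simpa using hgen p q h (-t)) (p := q) (q := p)
          (by simpa using hq) (by simpa using hp)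
          (fun k hk => by
            have := hqmin k (by simpa using hk)
            simp only [div_neg]; linarith)
          (fun k hk => by
            have := hpmax k (by simpa using hk)
            simp only [div_neg]; linarith)
        simpa [div_neg] using this
    simp only [hiff, sign_pos hp, sign_neg hq]
    split_ifs <;> simp
  · intro i _ hi
    simp only [mem_insert, mem_singleton, not_or] at hi
    rcases lt_trichotomy (d i) 0 with hd | hd | hd
    · rw [if_neg]
      intro h
      have h1 := h q (Ne.symm hi.2)
      have h2 := hqmin i hd
      have : a q = a q / d q * d q := (div_mul_cancel₀ _ hq.ne).symm
      rw [this] at h1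
      nlinarith
    · simp [hd]
    · rw [if_neg]
      intro h
      have h1 := h p (Ne.symm hi.1)
      have h2 := hpmax i hd
      have : a p = a p / d p * d p := (div_mul_cancel₀ _ hp.ne').symm
      rw [this] at h1
      nlinarith

open Classical in
/-- The indicator function of the open cone spanned by `v`, multiplied by the orientation of `v`
(so it vanishes when `v` is linearly dependent). -/
def sind (n : ℕ) (v : Fin n → Fin n → ℝ) (y : Fin n → ℝ) : ℤ :=
  if y ∈ openCone n n v then (SignType.sign (Matrix.of v).det : ℤ) else 0

/-- Cramer's rule as a linear relation among `N + 2` vectors of `ℝ^(N+1)`. -/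
lemma cramer_rel {N : ℕ} (W : Fin (N + 2) → Fin (N + 1) → ℝ) :
    ∑ i : Fin (N + 2), ((-1 : ℝ) ^ (i : ℕ) * (Matrix.of fun t => W (i.succAbove t)).det) • W i = 0 := by
  funext k
  have h : (Matrix.of fun i : Fin (N + 2) => (Fin.cons (W i k) (W i) : Fin (N + 2) → ℝ)).det = 0 :=
    Matrix.det_zero_of_column_eq (i := 0) (j := k.succ) (Fin.succ_ne_zero k).symm (by simp)
  rw [Matrix.det_succ_column_zero] at h
  rw [Finset.sum_apply, Pi.zero_apply, ← h]
  refine Finset.sum_congr rfl fun i _ => ?_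
  have : (Matrix.of fun i : Fin (N + 2) => (Fin.cons (W i k) (W i) : Fin (N + 2) → ℝ)).submatrix
      i.succAbove Fin.succ = Matrix.of fun t => W (i.succAbove t) := by
    ext; simp
  rw [this]
  simp
  ring

lemma coeff_unique {n : ℕ} {v : Fin n → Fin n → ℝ} (h : (Matrix.of v).det ≠ 0)
    {c c' : Fin n → ℝ} (hc : ∑ t, c t • v t = ∑ t, c' t • v t) : c = c' := by
  have hinj : Function.Injective fun c : Fin n → ℝ => Matrix.vecMul c (Matrix.of v) :=
    Matrix.vecMul_injective_of_isUnit ((Matrix.isUnit_iff_isUnit_det _).2 h.isUnit)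
  apply hinj
  funext k
  have := congrFun hc k
  simpa [Matrix.vecMul, dotProduct] using this

lemma coeff_exists {n : ℕ} {v : Fin n → Fin n → ℝ} (h : (Matrix.of v).det ≠ 0) (y : Fin n → ℝ) :
    ∃ c : Fin n → ℝ, y = ∑ t, c t • v t := by
  refine ⟨Matrix.vecMul y (Matrix.of v)⁻¹, ?_⟩
  have : Matrix.vecMul (Matrix.vecMul y (Matrix.of v)⁻¹) (Matrix.of v) = y := by
    rw [Matrix.vecMul_vecMul, Matrix.nonsing_inv_mul _ h.isUnit, Matrix.vecMul_one]
  conv_lhs => rw [← this]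
  funext k
  simp [Matrix.vecMul, dotProduct]

open Classical in
/-- The signed indicators of cones form a cocycle: for `N + 2` vectors of `ℝ^(N+1)` in an open
half-space and `y` on no subspace spanned by `N` of them, the alternating sum over the `N + 2`
subcones vanishes at `y`. -/
lemma sind_cocycle {N : ℕ} (W : Fin (N + 2) → Fin (N + 1) → ℝ)
    (hW : ∀ i, 0 < ∑ k, W i k) (y : Fin (N + 1) → ℝ)
    (hgen : ∀ p q, p ≠ q → ∀ a : Fin (N + 2) → ℝ, a p = 0 → a q = 0 → y ≠ ∑ i, a i • W i) :
    ∑ i : Fin (N + 2), (-1 : ℤ) ^ (i : ℕ) * sind (N + 1) (fun t => W (i.succAbove t)) y = 0 := by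
  set D : Fin (N + 2) → ℝ := fun i => (Matrix.of fun t => W (i.succAbove t)).det with hD
  set d : Fin (N + 2) → ℝ := fun i => (-1 : ℝ) ^ (i : ℕ) * D i with hd
  have hrel : ∑ i, d i • W i = 0 := cramer_rel W
  have hdD : ∀ i, D i = 0 ↔ d i = 0 := fun i => by simp [hd]
  have hsd : ∀ i, (SignType.sign (d i) : ℤ) = (-1 : ℤ) ^ (i : ℕ) * (SignType.sign (D i) : ℤ) := by
    intro i
    rcases neg_one_pow_eq_or ℝ (i : ℕ) with h | h <;> rcases Nat.even_or_odd (i : ℕ) with h' | h'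
    · simp [hd, h'.neg_one_pow]
    · rw [h'.neg_one_pow] at h; norm_num at h
    · rw [h'.neg_one_pow] at h; norm_num at h
    · simp [hd, h'.neg_one_pow, Left.sign_neg]
  by_cases hall : ∀ i, d i = 0
  · refine Finset.sum_eq_zero fun i _ => ?_
    have : D i = 0 := (hdD i).2 (hall i)
    simp only [hD] at this
    simp [sind, this]
  push Not at hall
  obtain ⟨i₀, hi₀⟩ := hall
  have hsum : ∑ i, d i * ∑ k, W i k = 0 := by
    have : ∑ k, (∑ i, d i • W i) k = 0 := by rw [hrel]; simp
    simp only [Finset.sum_apply, Pi.smul_apply, smul_eq_mul] at this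
    rw [Finset.sum_comm] at this
    simpa [Finset.mul_sum] using this
  -- both signs occur in the relation, since the vectors lie in an open half-space
  have hpos : ∃ i, 0 < d i := by
    by_contra! hcon
    have := (Finset.sum_eq_zero_iff_of_nonpos
      (fun i _ => mul_nonpos_of_nonpos_of_nonneg (hcon i) (hW i).le)).1 hsum i₀ (by simp)
    exact (mul_ne_zero hi₀ (hW i₀).ne') this
  have hneg : ∃ i, d i < 0 := by
    by_contra! hcon
    have := (Finset.sum_eq_zero_iff_of_nonneg
      (fun i _ => mul_nonneg (hcon i) (hW i).le)).1 hsum i₀ (by simp)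
    exact (mul_ne_zero hi₀ (hW i₀).ne') this
  obtain ⟨c, hc⟩ := coeff_exists (v := fun t => W (i₀.succAbove t))
    (fun h => hi₀ ((hdD i₀).1 h)) y
  obtain ⟨a, ha⟩ : ∃ a : Fin (N + 2) → ℝ, y = ∑ i, a i • W i :=
    ⟨i₀.insertNth 0 c, by rw [Fin.sum_univ_succAbove _ i₀]; simpa using hc⟩
  have hline : ∀ t : ℝ, y = ∑ i, (a i + t * d i) • W i := by
    intro t
    simp only [add_smul, mul_smul, Finset.sum_add_distrib, ← Finset.smul_sum, hrel, smul_zero,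
      add_zero]
    exact ha
  rw [← sum_crossings a d (fun p q hpq t h => hgen p q hpq _ h.1 h.2 (hline t)) hpos hneg]
  refine Finset.sum_congr rfl fun i _ => ?_
  rw [hsd i]
  by_cases hi : d i = 0
  · have : D i = 0 := (hdD i).2 hi
    rw [this]
    simp only [hD] at this
    simp [sind, this]
  have hiff : y ∈ openCone (N + 1) (N + 1) (fun t => W (i.succAbove t)) ↔
      ∀ k, k ≠ i → 0 < a k - a i / d i * d k := by
    have h1 : y = ∑ t, (a (i.succAbove t) - a i / d i * d (i.succAbove t)) •
        W (i.succAbove t) := by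
      have := hline (-(a i / d i))
      rw [Fin.sum_univ_succAbove _ i] at this
      have h0 : a i + -(a i / d i) * d i = 0 := by field_simp; ring
      rw [h0, zero_smul, zero_add] at this
      rw [this]
      refine Finset.sum_congr rfl fun t _ => ?_
      congr 1; ring
    constructor
    · rintro ⟨b, hb, hyb⟩ k hk
      obtain ⟨t, rfl⟩ := Fin.exists_succAbove_eq hk
      have := coeff_unique (v := fun t => W (i.succAbove t))
        (fun h => hi ((hdD i).1 h)) (hyb.symm.trans h1)
      rw [← congrFun this t]
      exact hb t
    · intro h
      exact ⟨_, fun t => h _ (Fin.succAbove_ne i t), h1⟩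
  simp only [sind, hiff]
  split_ifs <;> simp [hD]

/-! ### The Freudenthal–Kuhn triangulation -/

/-- The `k`-th vertex of the simplex of the Freudenthal–Kuhn triangulation of `ℝ^N` based at the
lattice point `m` and indexed by the permutation `τ`: the point
`m + e_{τ 0} + ⋯ + e_{τ (k-1)}`. -/
def path {N : ℕ} (m : Fin N → ℤ) (τ : Equiv.Perm (Fin N)) (k : Fin (N + 1)) : Fin N → ℤ :=
  fun s => m s + if ((τ.symm s : Fin N) : ℕ) < (k : ℕ) then 1 else 0

/-- Two simplices whose permutations differ by an adjacent transposition share all vertices but one. -/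
lemma path_swap {N : ℕ} (m : Fin N → ℤ) (τ : Equiv.Perm (Fin N)) (p q : Fin N)
    (hpq : (q : ℕ) = p + 1) (k : Fin (N + 1)) (hk : (k : ℕ) ≠ q) :
    path m (τ * Equiv.swap p q) k = path m τ k := by
  funext s
  have h : (τ * Equiv.swap p q).symm s = Equiv.swap p q (τ.symm s) := by
    rw [Equiv.symm_apply_eq]; simp
  simp only [path, h]
  congr 1
  rcases eq_or_ne (τ.symm s) p with h1 | h1
  · rw [h1, Equiv.swap_apply_left]
    refine if_congr ?_ rfl rfl
    omega
  rcases eq_or_ne (τ.symm s) q with h2 | h2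
  · rw [h2, Equiv.swap_apply_right]
    refine if_congr ?_ rfl rfl
    omega
  rw [Equiv.swap_apply_of_ne_of_ne h1 h2]

/-- The facet of `(m, τ)` opposite its first vertex is the facet opposite the last vertex of a
neighbouring simplex, based at `m + e_{τ 0}`. -/
lemma path_rot {M : ℕ} (m : Fin (M + 1) → ℤ) (τ : Equiv.Perm (Fin (M + 1))) (t : Fin (M + 1)) :
    path m τ t.succ = path (m + Pi.single (τ 0) 1) (τ * finRotate (M + 1)) t.castSucc := by
  funext s
  obtain ⟨u, rfl⟩ : ∃ u, s = τ (finRotate (M + 1) u) :=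
    ⟨(finRotate (M + 1)).symm (τ.symm s), by simp⟩
  have h : (τ * finRotate (M + 1)).symm (τ (finRotate (M + 1) u)) = u := by
    rw [Equiv.symm_apply_eq]; simp
  simp only [path, h, Equiv.symm_apply_apply, Pi.add_apply, coe_finRotate, Fin.val_succ,
    Fin.val_castSucc]
  have ht := t.isLt
  by_cases hu : u = Fin.last M
  · subst hu
    have : finRotate (M + 1) (Fin.last M) = 0 := finRotate_last
    rw [this]
    simp
    omega
  · have hne : finRotate (M + 1) u ≠ 0 := by
      intro h0
      rw [← finRotate_last] at h0
      exact hu ((finRotate (M + 1)).injective h0)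
    have : τ (finRotate (M + 1) u) ≠ τ 0 := fun h => hne (τ.injective h)
    rw [Pi.single_eq_of_ne this]
    simp [hu]

/-- If `τ` moves the coordinate `0` first, the facet opposite the first vertex lies in the hyperplane
`m 0 = a + 1` and is a simplex of the triangulation of that hyperplane. -/
lemma path_cons {M : ℕ} (a : ℤ) (m : Fin M → ℤ) (τ : Equiv.Perm (Fin M)) (t : Fin (M + 1)) :
    path (Fin.cons a m : Fin (M + 1) → ℤ) (Equiv.Perm.decomposeFin.symm (0, τ)) t.succ =
      Fin.cons (a + 1) (path m τ t) := by
  funext s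
  refine Fin.cases ?_ (fun s => ?_) s
  · have : (Equiv.Perm.decomposeFin.symm (0, τ)).symm 0 = 0 := by
      rw [Equiv.symm_apply_eq]; simp
    simp [path, this]
  · have : (Equiv.Perm.decomposeFin.symm (0, τ)).symm s.succ = (τ.symm s).succ := by
      rw [Equiv.symm_apply_eq]; simp
    simp [path, this]

/-- The sum of the facet function `G` over the triangulation of the hyperplane `m 0 = a`, counted with
orientation.  The inner sum is only meaningful when it has finite support. -/
def layer {M : ℕ} (G : (Fin (M + 1) → Fin (M + 1) → ℤ) → ℤ) (a : ℤ) : ℤ :=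
  ∑ τ : Equiv.Perm (Fin M), (Equiv.Perm.sign τ : ℤ) *
    ∑ᶠ m : Fin M → ℤ, G fun t => Fin.cons a (path m τ t)

/-- The sum of the facet function `G` over the `i`-th facets of the simplices of type `τ` in the
slab `a ≤ m 0 ≤ a + 1`. -/
def facetSum {M : ℕ} (G : (Fin (M + 1) → Fin (M + 1) → ℤ) → ℤ) (a : ℤ)
    (τ : Equiv.Perm (Fin (M + 1))) (i : Fin (M + 2)) : ℤ :=
  ∑ᶠ m : Fin M → ℤ, G fun t => path (Fin.cons a m : Fin (M + 1) → ℤ) τ (i.succAbove t)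

/-- Facets other than the first and the last one are shared by two simplices with the same base
point and opposite orientations. -/
lemma facetSum_inner {M : ℕ} (G : (Fin (M + 1) → Fin (M + 1) → ℤ) → ℤ) (a : ℤ) (j : Fin M) :
    ∑ τ : Equiv.Perm (Fin (M + 1)),
      (Equiv.Perm.sign τ : ℤ) * facetSum G a τ j.castSucc.succ = 0 := by
  have hne : j.castSucc ≠ j.succ := (Fin.castSucc_lt_succ (i := j)).ne
  have key : ∀ τ : Equiv.Perm (Fin (M + 1)),
      facetSum G a (τ * Equiv.swap j.castSucc j.succ) j.castSucc.succ =
        facetSum G a τ j.castSucc.succ := by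
    intro τ
    unfold facetSum
    congr 1
    funext m
    congr 1
    funext t
    refine path_swap _ τ _ _ (by simp) _ ?_
    intro h
    exact Fin.succAbove_ne j.castSucc.succ t (Fin.ext (by simpa using h))
  have h2 : ∑ τ : Equiv.Perm (Fin (M + 1)),
      (Equiv.Perm.sign τ : ℤ) * facetSum G a τ j.castSucc.succ =
      - ∑ τ : Equiv.Perm (Fin (M + 1)),
      (Equiv.Perm.sign τ : ℤ) * facetSum G a τ j.castSucc.succ := by
    conv_lhs => rw [← Equiv.sum_comp (Equiv.mulRight (Equiv.swap j.castSucc j.succ))]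
    rw [← Finset.sum_neg_distrib]
    refine Finset.sum_congr rfl fun τ _ => ?_
    simp [key, Equiv.Perm.sign_mul, Equiv.Perm.sign_swap hne]
  linarith

/-- First facets agree with the last facets of the simplices with rotated permutation, based in the
same slab or, if `τ 0 = 0`, in the next one. -/
lemma facetSum_rot {M : ℕ} (G : (Fin (M + 1) → Fin (M + 1) → ℤ) → ℤ) (a : ℤ)
    (τ : Equiv.Perm (Fin (M + 1))) :
    facetSum G a τ 0 =
      facetSum G (if τ 0 = 0 then a + 1 else a) (τ * finRotate (M + 1)) (Fin.last _) := by
  unfold facetSum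
  simp only [Fin.succAbove_zero, Fin.succAbove_last, path_rot]
  split_ifs with h
  · congr 1
    funext m
    congr 1
    funext t
    congr 1
    rw [h]
    funext s
    refine Fin.cases ?_ (fun s => ?_) s <;> simp
  · obtain ⟨s₀, hs₀⟩ := Fin.exists_succ_eq.2 h
    conv_rhs => rw [← finsum_comp_equiv (Equiv.addRight (Pi.single s₀ (1 : ℤ)))]
    congr 1
    funext m
    congr 1
    funext t
    congr 1
    rw [← hs₀]
    funext s
    refine Fin.cases ?_ (fun s => ?_) s
    · simp
    · simp [Pi.single_apply]

/-- In the boundary of the slab `a ≤ m 0 ≤ a + 1` all facets cancel in pairs, except those on the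
two bounding hyperplanes. -/
lemma slab_boundary {M : ℕ} (G : (Fin (M + 1) → Fin (M + 1) → ℤ) → ℤ) (a : ℤ) :
    ∑ τ : Equiv.Perm (Fin (M + 1)), (Equiv.Perm.sign τ : ℤ) *
      ∑ i : Fin (M + 2), (-1 : ℤ) ^ (i : ℕ) * facetSum G a τ i = layer G (a + 1) - layer G a := by
  have h1 : ∑ τ : Equiv.Perm (Fin (M + 1)), (Equiv.Perm.sign τ : ℤ) *
      ∑ i : Fin (M + 2), (-1 : ℤ) ^ (i : ℕ) * facetSum G a τ i =
      ∑ τ : Equiv.Perm (Fin (M + 1)), (Equiv.Perm.sign τ : ℤ) * facetSum G a τ 0 +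
      (-1) ^ (M + 1) * ∑ τ : Equiv.Perm (Fin (M + 1)),
        (Equiv.Perm.sign τ : ℤ) * facetSum G a τ (Fin.last _) := by
    have : ∀ i : Fin (M + 2), ∑ τ : Equiv.Perm (Fin (M + 1)), (Equiv.Perm.sign τ : ℤ) *
        ((-1 : ℤ) ^ (i : ℕ) * facetSum G a τ i) = (-1 : ℤ) ^ (i : ℕ) *
        ∑ τ : Equiv.Perm (Fin (M + 1)), (Equiv.Perm.sign τ : ℤ) * facetSum G a τ i := by
      intro i
      rw [Finset.mul_sum]
      exact Finset.sum_congr rfl fun τ _ => by ring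
    simp only [Finset.mul_sum]
    rw [Finset.sum_comm]
    simp only [this]
    rw [Fin.sum_univ_succ, Fin.sum_univ_castSucc]
    simp only [facetSum_inner, mul_zero, Finset.sum_const_zero, Fin.succ_last, Fin.val_zero,
      pow_zero, one_mul, Fin.val_last, zero_add, Finset.mul_sum]
  have h2 : ∑ τ : Equiv.Perm (Fin (M + 1)),
        (Equiv.Perm.sign τ : ℤ) * facetSum G a τ (Fin.last _) =
      (-1) ^ M * ∑ τ : Equiv.Perm (Fin (M + 1)),
        (Equiv.Perm.sign τ : ℤ) * facetSum G a (τ * finRotate (M + 1)) (Fin.last _) := by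
    rw [← Equiv.sum_comp (Equiv.mulRight (finRotate (M + 1))), Finset.mul_sum]
    refine Finset.sum_congr rfl fun τ _ => ?_
    simp [Equiv.Perm.sign_mul, sign_finRotate]
    ring
  have hsq : ((-1 : ℤ) ^ (M + 1)) * (-1) ^ M = -1 := by
    rw [← pow_add]
    exact Odd.neg_one_pow ⟨M, by ring⟩
  rw [h1, h2, ← mul_assoc, hsq, neg_one_mul, ← sub_eq_add_neg, ← Finset.sum_sub_distrib]
  simp only [← mul_sub]
  rw [← Equiv.sum_comp Equiv.Perm.decomposeFin.symm, Fintype.sum_prod_type, Fin.sum_univ_succ]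
  have h3 : ∀ (p : Fin M) (τ : Equiv.Perm (Fin M)),
      facetSum G a (Equiv.Perm.decomposeFin.symm (p.succ, τ)) 0 -
      facetSum G a (Equiv.Perm.decomposeFin.symm (p.succ, τ) * finRotate (M + 1)) (Fin.last _)
        = 0 := by
    intro p τ
    rw [facetSum_rot, if_neg (by simp), sub_self]
  have h4 : ∀ (b : ℤ) (τ : Equiv.Perm (Fin M)),
      facetSum G b (Equiv.Perm.decomposeFin.symm (0, τ)) 0 =
        ∑ᶠ m : Fin M → ℤ, G fun t => Fin.cons (b + 1) (path m τ t) := by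
    intro b τ
    simp only [facetSum, Fin.succAbove_zero, path_cons]
  have h5 : ∀ τ : Equiv.Perm (Fin M),
      facetSum G a (Equiv.Perm.decomposeFin.symm (0, τ) * finRotate (M + 1)) (Fin.last _) =
        ∑ᶠ m : Fin M → ℤ, G fun t => Fin.cons a (path m τ t) := by
    intro τ
    have := facetSum_rot G (a - 1) (Equiv.Perm.decomposeFin.symm (0, τ))
    rw [if_pos (by simp), sub_add_cancel] at this
    rw [← this, h4, sub_add_cancel]
  simp only [h3, h4, h5, mul_zero, Finset.sum_const_zero, add_zero, layer,
    Equiv.Perm.decomposeFin.symm_sign, if_true, one_mul, mul_sub, Finset.sum_sub_distrib]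

/-! ### Logarithmic estimates -/

/-- The vectors `ℓ k` are linearly independent modulo the vector `(1, …, 1)`. -/
def LogIndep {K n : ℕ} (ℓ : Fin K → Fin n → ℝ) : Prop :=
  ∀ (a : Fin K → ℝ) (b : ℝ), (∀ i, ∑ k, a k * ℓ k i = b) → a = 0

/-- Modulo `(1, …, 1)` the `ℓ k` span a lattice, so a bounded region meets it in a finite set. -/
lemma finite_near {K n : ℕ} {ℓ : Fin K → Fin n → ℝ} (hℓ : LogIndep ℓ) (u : Fin n → ℝ) (B : ℝ) :
    {m : Fin K → ℤ | ∃ s : ℝ, ∀ i, |u i - s - ∑ k, (m k : ℝ) * ℓ k i| ≤ B}.Finite := by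
  let φ : (Fin K → ℝ) →ₗ[ℝ] (Fin n × Fin n → ℝ) :=
    { toFun := fun a p => ∑ k, a k * ℓ k p.1 - ∑ k, a k * ℓ k p.2
      map_add' := by
        intro a b; funext p
        simp only [Pi.add_apply, add_mul, Finset.sum_add_distrib]; ring
      map_smul' := by
        intro r a; funext p
        simp only [Pi.smul_apply, smul_eq_mul, mul_assoc, ← Finset.mul_sum, RingHom.id_apply]
        ring }
  have hφ : LinearMap.ker φ = ⊥ := by
    refine LinearMap.ker_eq_bot'.2 fun a ha => ?_
    rcases n.eq_zero_or_pos with rfl | hn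
    · exact hℓ a 0 fun i => i.elim0
    · refine hℓ a (∑ k, a k * ℓ k ⟨0, hn⟩) fun i => ?_
      have := congrFun ha (i, ⟨0, hn⟩)
      exact sub_eq_zero.1 this
  obtain ⟨κ, -, hκ⟩ := φ.exists_antilipschitzWith hφ
  have hbd := hκ.isBounded_preimage (s := Metric.closedBall 0 (2 * |B| + 2 * ‖u‖))
    Metric.isBounded_closedBall
  obtain ⟨R, hR⟩ := hbd.subset_closedBall 0
  refine (Set.finite_Icc (fun _ : Fin K => -⌈R⌉) (fun _ => ⌈R⌉)).subset ?_
  rintro m ⟨s, hs⟩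
  have hm : (fun k => (m k : ℝ)) ∈ Metric.closedBall (0 : Fin K → ℝ) R := by
    apply hR
    simp only [Set.mem_preimage, mem_closedBall_zero_iff]
    rw [pi_norm_le_iff_of_nonneg (by positivity)]
    rintro ⟨i, i'⟩
    have h1 := abs_le.1 (hs i)
    have h2 := abs_le.1 (hs i')
    have h3 := abs_le.1 (norm_le_pi_norm u i)
    have h4 := abs_le.1 (norm_le_pi_norm u i')
    have h5 := le_abs_self B
    rw [Real.norm_eq_abs, abs_le]
    change -_ ≤ ∑ k, (m k : ℝ) * ℓ k i - ∑ k, (m k : ℝ) * ℓ k i' ∧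
      ∑ k, (m k : ℝ) * ℓ k i - ∑ k, (m k : ℝ) * ℓ k i' ≤ _
    constructor <;> linarith
  rw [mem_closedBall_zero_iff] at hm
  have hk : ∀ k, |(m k : ℝ)| ≤ ⌈R⌉ := fun k =>
    (norm_le_pi_norm (fun k => (m k : ℝ)) k).trans (hm.trans (Int.le_ceil R))
  constructor <;> intro k
  · have := (abs_le.1 (hk k)).1
    exact_mod_cast this
  · have := (abs_le.1 (hk k)).2
    exact_mod_cast this

/-- Positive combinations of vectors that are multiplicatively close to `exp L` stay close to it,
up to a common scaling factor. -/
lemma log_est {ι : Type*} {p : ℕ} [NeZero p] (w : Fin p → ι → ℝ) (hw : ∀ t i, 0 < w t i)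
    (L : ι → ℝ) (B : ℝ) (hB : ∀ t i, |Real.log (w t i) - L i| ≤ B)
    (c : Fin p → ℝ) (hc : ∀ t, 0 < c t) :
    ∃ s : ℝ, ∀ i, |Real.log (∑ t, c t * w t i) - s - L i| ≤ B := by
  have hC : 0 < ∑ t, c t := Finset.sum_pos (fun t _ => hc t) ⟨0, Finset.mem_univ _⟩
  refine ⟨Real.log (∑ t, c t), fun i => ?_⟩
  have hy : 0 < ∑ t, c t * w t i :=
    Finset.sum_pos (fun t _ => mul_pos (hc t) (hw t i)) ⟨0, Finset.mem_univ _⟩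
  have hup : ∑ t, c t * w t i ≤ (∑ t, c t) * Real.exp (L i + B) := by
    rw [Finset.sum_mul]
    refine Finset.sum_le_sum fun t _ => mul_le_mul_of_nonneg_left ?_ (hc t).le
    rw [← Real.log_le_iff_le_exp (hw t i)]
    linarith [(abs_le.1 (hB t i)).2]
  have hlo : (∑ t, c t) * Real.exp (L i - B) ≤ ∑ t, c t * w t i := by
    rw [Finset.sum_mul]
    refine Finset.sum_le_sum fun t _ => mul_le_mul_of_nonneg_left ?_ (hc t).le
    rw [← Real.le_log_iff_exp_le (hw t i)]
    linarith [(abs_le.1 (hB t i)).1]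
  have h1 := Real.log_le_log hy hup
  have h2 := Real.log_le_log (by positivity) hlo
  rw [Real.log_mul hC.ne' (Real.exp_pos _).ne', Real.log_exp] at h1 h2
  rw [abs_le]
  constructor <;> linarith

lemma path_est {N n : ℕ} (ℓ : Fin N → Fin n → ℝ) (m : Fin N → ℤ) (τ : Equiv.Perm (Fin N))
    (k : Fin (N + 1)) (i : Fin n) :
    |∑ s, (path m τ k s : ℝ) * ℓ s i - ∑ s, (m s : ℝ) * ℓ s i| ≤ ∑ s, ∑ i, |ℓ s i| := by
  rw [← Finset.sum_sub_distrib]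
  refine (Finset.abs_sum_le_sum_abs _ _).trans (Finset.sum_le_sum fun s _ => ?_)
  refine le_trans ?_ (Finset.single_le_sum (f := fun i => |ℓ s i|) (fun _ _ => abs_nonneg _)
    (Finset.mem_univ i))
  rw [← sub_mul, abs_mul]
  refine mul_le_of_le_one_left (abs_nonneg _) ?_
  simp only [path]
  split_ifs <;> simp

/-- The vertices of the simplex `(m, τ)` are uniformly close to its base point. -/
lemma vertex_est {N n : ℕ} {ℓ : Fin N → Fin n → ℝ} {V : (Fin N → ℤ) → Fin n → ℝ} {B : ℝ}
    (hB : ∀ m i, |Real.log (V m i) - ∑ k, (m k : ℝ) * ℓ k i| ≤ B)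
    (m : Fin N → ℤ) (τ : Equiv.Perm (Fin N)) (k : Fin (N + 1)) (i : Fin n) :
    |Real.log (V (path m τ k) i) - ∑ k, (m k : ℝ) * ℓ k i| ≤ B + ∑ s, ∑ i, |ℓ s i| := by
  have h1 := hB (path m τ k) i
  have h2 := path_est ℓ m τ k i
  calc _ = |(Real.log (V (path m τ k) i) - ∑ s, (path m τ k s : ℝ) * ℓ s i) +
        (∑ s, (path m τ k s : ℝ) * ℓ s i - ∑ s, (m s : ℝ) * ℓ s i)| := by ring_nf
    _ ≤ _ := (abs_add_le _ _).trans (add_le_add h1 h2)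

/-- Only finitely many of the cones over the simplices `(m, τ)` meet a given region that is bounded
in logarithmic coordinates. -/
lemma finite_cones {N : ℕ} {ℓ : Fin N → Fin (N + 1) → ℝ} (hℓ : LogIndep ℓ)
    {V : (Fin N → ℤ) → Fin (N + 1) → ℝ} (hV : ∀ m i, 0 < V m i) {B : ℝ}
    (hB : ∀ m i, |Real.log (V m i) - ∑ k, (m k : ℝ) * ℓ k i| ≤ B)
    (u : Fin (N + 1) → ℝ) (r : ℝ) :
    {m : Fin N → ℤ | ∃ (τ : Equiv.Perm (Fin N)) (y : Fin (N + 1) → ℝ),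
      (∀ i, |Real.log (y i) - u i| ≤ r) ∧
      y ∈ openCone (N + 1) (N + 1) (fun t => V (path m τ t))}.Finite := by
  refine (finite_near hℓ u (B + ∑ s, ∑ i, |ℓ s i| + r)).subset ?_
  rintro m ⟨τ, y, hyu, c, hc, rfl⟩
  obtain ⟨s, hs⟩ := log_est (fun t => V (path m τ t)) (fun t i => hV _ i)
    (fun i => ∑ k, (m k : ℝ) * ℓ k i) _ (fun t i => vertex_est hB m τ t i) c hc
  refine ⟨s, fun i => ?_⟩
  have h1 := hs i
  have h2 := hyu i
  simp only [Finset.sum_apply, Pi.smul_apply, smul_eq_mul] at h2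
  rw [abs_le] at *
  constructor <;> linarith [h1.1, h1.2, h2.1, h2.2]

/-- A linear functional that vanishes on `(1, …, 1)` and on the `ℓ k` with `k ≠ 0`, but not on
`ℓ 0`. -/
lemma exists_functional {M : ℕ} {ℓ : Fin (M + 1) → Fin (M + 2) → ℝ} (hℓ : LogIndep ℓ) :
    ∃ f : Fin (M + 2) → ℝ, ∑ i, f i = 0 ∧ (∀ k : Fin M, ∑ i, f i * ℓ k.succ i = 0) ∧
      ∑ i, f i * ℓ 0 i ≠ 0 := by
  have hnot : ℓ 0 ∉ Submodule.span ℝ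
      (insert (fun _ => (1 : ℝ)) (Set.range fun k : Fin M => ℓ k.succ)) := by
    intro hmem
    obtain ⟨b, z, hz, hbz⟩ := Submodule.mem_span_insert.1 hmem
    obtain ⟨c, rfl⟩ := (Submodule.mem_span_range_iff_exists_fun ℝ).1 hz
    have := hℓ (Fin.cons 1 fun k => - c k) b fun i => by
      rw [Fin.sum_univ_succ, hbz]
      simp
    have := congrFun this 0
    simp at this
  obtain ⟨g, hg, hker⟩ := Submodule.exists_le_ker_of_notMem hnot
  have hrep : ∀ v : Fin (M + 2) → ℝ, ∑ i, g (Pi.single i 1) * v i = g v := by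
    intro v
    conv_rhs => rw [pi_eq_sum_univ' v]
    rw [map_sum]
    refine Finset.sum_congr rfl fun i _ => ?_
    rw [map_smul, smul_eq_mul, mul_comm]
  refine ⟨fun i => g (Pi.single i 1), ?_, fun k => ?_, ?_⟩
  · have : g (fun _ => 1) = 0 := hker (Submodule.subset_span (Set.mem_insert _ _))
    rw [← this, ← hrep]
    simp
  · rw [hrep]
    exact hker (Submodule.subset_span (Set.mem_insert_of_mem _ ⟨k, rfl⟩))
  · rw [hrep]
    exact hg

/-- Forgetting a coordinate `j` on which such a functional depends preserves the independence of the
remaining `ℓ k`, which makes induction on the dimension possible. -/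
lemma logIndep_proj {M : ℕ} {ℓ : Fin (M + 1) → Fin (M + 2) → ℝ} (hℓ : LogIndep ℓ)
    {f : Fin (M + 2) → ℝ} (hf1 : ∑ i, f i = 0) (hf2 : ∀ k : Fin M, ∑ i, f i * ℓ k.succ i = 0)
    {j : Fin (M + 2)} (hj : f j ≠ 0) :
    LogIndep fun (k : Fin M) i => ℓ k.succ (j.succAbove i) := by
  intro a b hab
  have h1 : ∑ i, f i * (∑ k, a k * ℓ k.succ i - b) = 0 := by
    simp only [mul_sub, Finset.sum_sub_distrib, Finset.mul_sum]
    rw [← Finset.sum_mul, hf1, zero_mul, sub_zero, Finset.sum_comm]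
    refine Finset.sum_eq_zero fun k _ => ?_
    have := hf2 k
    calc _ = a k * ∑ i, f i * ℓ k.succ i := by
          rw [Finset.mul_sum]; exact Finset.sum_congr rfl fun i _ => by ring
      _ = 0 := by rw [this, mul_zero]
  rw [Fin.sum_univ_succAbove _ j] at h1
  simp only [hab, sub_self, mul_zero, Finset.sum_const_zero, add_zero] at h1
  have h2 : ∑ k, a k * ℓ k.succ j = b :=
    sub_eq_zero.1 ((mul_eq_zero.1 h1).resolve_left hj)
  have h3 := hℓ (Fin.cons 0 a) b fun i => by
    rw [Fin.sum_univ_succ]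
    simp only [Fin.cons_zero, zero_mul, Fin.cons_succ, zero_add]
    rcases eq_or_ne i j with rfl | hi
    · exact h2
    · obtain ⟨i', rfl⟩ := Fin.exists_succAbove_eq hi
      exact hab i'
  funext k
  have := congrFun h3 k.succ
  simpa using this

/-- A point lies in the cone of `(e_j, w)` exactly when it lies strictly above a point of the cone of
`w` in direction `e_j`. -/
lemma mem_openCone_cons {N : ℕ} (j : Fin (N + 1)) (w : Fin N → Fin (N + 1) → ℝ)
    (y : Fin (N + 1) → ℝ) :
    y ∈ openCone (N + 1) (N + 1) (Fin.cons (Pi.single j 1) w : Fin (N + 1) → Fin (N + 1) → ℝ) ↔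
      ∃ c : Fin N → ℝ, (∀ t, 0 < c t) ∧
        (∀ i, y (j.succAbove i) = ∑ t, c t * w t (j.succAbove i)) ∧ ∑ t, c t * w t j < y j := by
  constructor
  · rintro ⟨c, hc, rfl⟩
    refine ⟨fun t => c t.succ, fun t => hc _, fun i => ?_, ?_⟩
    · simp [Fin.sum_univ_succ]
    · simp [Fin.sum_univ_succ, hc]
  · rintro ⟨c, hc, h1, h2⟩
    refine ⟨Fin.cons (y j - ∑ t, c t * w t j) c, fun t => ?_, ?_⟩
    · refine Fin.cases ?_ (fun t => ?_) t
      · simpa using h2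
      · simpa using hc t
    · funext i
      rcases eq_or_ne i j with rfl | hi
      · simp [Fin.sum_univ_succ]
      · obtain ⟨i', rfl⟩ := Fin.exists_succAbove_eq hi
        simp [Fin.sum_univ_succ, h1]

lemma det_cons_single {N : ℕ} (j : Fin (N + 1)) (w : Fin N → Fin (N + 1) → ℝ) :
    (Matrix.of (Fin.cons (Pi.single j 1) w : Fin (N + 1) → Fin (N + 1) → ℝ)).det =
      (-1) ^ (j : ℕ) * (Matrix.of fun t i => w t (j.succAbove i)).det := by
  rw [Matrix.det_succ_row_zero, Fintype.sum_eq_single j]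
  · simp
    rfl
  · intro i hi
    simp [hi]

/-- If `y` lies above the cone of `w` in direction `e_j`, the signed indicator of the cone of
`(e_j, w)` is that of the projection of `w` along `e_j`. -/
lemma sind_cons_above {N : ℕ} (j : Fin (N + 1)) (w : Fin N → Fin (N + 1) → ℝ)
    (y : Fin (N + 1) → ℝ)
    (h : ∀ c : Fin N → ℝ, (∀ t, 0 < c t) →
      (∀ i, y (j.succAbove i) = ∑ t, c t * w t (j.succAbove i)) → ∑ t, c t * w t j < y j) :
    sind (N + 1) (Fin.cons (Pi.single j 1) w) y =
      (-1) ^ (j : ℕ) * sind N (fun t i => w t (j.succAbove i)) (fun i => y (j.succAbove i)) := by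
  have hiff : y ∈ openCone (N + 1) (N + 1)
      (Fin.cons (Pi.single j 1) w : Fin (N + 1) → Fin (N + 1) → ℝ) ↔
      (fun i => y (j.succAbove i)) ∈ openCone N N (fun t i => w t (j.succAbove i)) := by
    rw [mem_openCone_cons]
    constructor
    · rintro ⟨c, hc, h1, -⟩
      exact ⟨c, hc, by funext i; simp [h1]⟩
    · rintro ⟨c, hc, h1⟩
      have h2 : ∀ i, y (j.succAbove i) = ∑ t, c t * w t (j.succAbove i) := fun i => by
        simpa using congrFun h1 i
      exact ⟨c, hc, h2, h c hc h2⟩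
  unfold sind
  rw [det_cons_single]
  by_cases hy : (fun i => y (j.succAbove i)) ∈ openCone N N (fun t i => w t (j.succAbove i))
  · rw [if_pos (hiff.2 hy), if_pos hy]
    rcases neg_one_pow_eq_or ℝ (j : ℕ) with h | h <;> rcases Nat.even_or_odd (j : ℕ) with h' | h'
    · simp [h'.neg_one_pow]
    · rw [h'.neg_one_pow] at h; norm_num at h
    · rw [h'.neg_one_pow] at h; norm_num at h
    · simp [h'.neg_one_pow, Left.sign_neg]
  · rw [if_neg (mt hiff.1 hy), if_neg hy, mul_zero]

/-- If `y` lies below the cone of `w` in direction `e_j`, it is not in the cone of `(e_j, w)`. -/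
lemma sind_cons_below {N : ℕ} (j : Fin (N + 1)) (w : Fin N → Fin (N + 1) → ℝ)
    (y : Fin (N + 1) → ℝ)
    (h : ∀ c : Fin N → ℝ, (∀ t, 0 < c t) →
      (∀ i, y (j.succAbove i) = ∑ t, c t * w t (j.succAbove i)) → y j < ∑ t, c t * w t j) :
    sind (N + 1) (Fin.cons (Pi.single j 1) w) y = 0 := by
  unfold sind
  rw [if_neg]
  rw [mem_openCone_cons]
  rintro ⟨c, hc, h1, h2⟩
  exact lt_asymm h2 (h c hc h1)

/-! ### The signed count of cones containing a generic point -/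

/-- `y` lies on no hyperplane spanned by points `V m` and standard basis vectors. -/
def Generic {N : ℕ} (V : (Fin N → ℤ) → Fin (N + 1) → ℝ) (y : Fin (N + 1) → ℝ) : Prop :=
  ∀ w : Fin N → Fin (N + 1) → ℝ, (∀ t, (∃ m, w t = V m) ∨ ∃ i, w t = Pi.single i 1) →
    ∀ c : Fin N → ℝ, y ≠ ∑ t, c t • w t

/-- The signed number of cones containing `y` in the image of the Freudenthal–Kuhn triangulation
of `ℝ^N` under the vertex map `V`.  Finiteness of the support of the sum follows from
`finite_cones`. -/
def count {N : ℕ} (V : (Fin N → ℤ) → Fin (N + 1) → ℝ) (y : Fin (N + 1) → ℝ) : ℤ :=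
  ∑ τ : Equiv.Perm (Fin N), (Equiv.Perm.sign τ : ℤ) *
    ∑ᶠ m : Fin N → ℤ, sind (N + 1) (fun t => V (path m τ t)) y

lemma Generic.proj {M : ℕ} {V : (Fin (M + 1) → ℤ) → Fin (M + 2) → ℝ} {y : Fin (M + 2) → ℝ}
    (h : Generic V y) (j : Fin (M + 2)) (a : ℤ) :
    Generic (fun (m : Fin M → ℤ) i => V (Fin.cons a m) (j.succAbove i))
      (fun i => y (j.succAbove i)) := by
  intro w hw c hy
  have hlift : ∀ t, ∃ w' : Fin (M + 2) → ℝ, ((∃ m, w' = V m) ∨ ∃ i, w' = Pi.single i 1) ∧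
      ∀ i, w' (j.succAbove i) = w t i := by
    intro t
    rcases hw t with ⟨m, hm⟩ | ⟨i, hi⟩
    · exact ⟨V (Fin.cons a m), Or.inl ⟨_, rfl⟩, fun i => by rw [hm]⟩
    · refine ⟨Pi.single (j.succAbove i) 1, Or.inr ⟨_, rfl⟩, fun i' => ?_⟩
      rw [hi]
      simp [Pi.single_apply]
  choose w' hw' hww' using hlift
  refine h (Fin.cons (Pi.single j 1) w') (fun t => ?_)
    (Fin.cons (y j - ∑ t, c t * w' t j) c) ?_
  · refine Fin.cases ?_ (fun t => ?_) t
    · exact Or.inr ⟨j, by simp⟩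
    · simpa using hw' t
  · funext i
    rcases eq_or_ne i j with rfl | hi
    · simp [Fin.sum_univ_succ]
    · obtain ⟨i', rfl⟩ := Fin.exists_succAbove_eq hi
      have := congrFun hy i'
      simpa [Fin.sum_univ_succ, hww'] using this

/-- The signed indicator of a cone is the alternating sum of those of the cones joining its facets
to `e_j`. -/
lemma sind_expand {N : ℕ} {V : (Fin N → ℤ) → Fin (N + 1) → ℝ} (hV : ∀ m i, 0 < V m i)
    {y : Fin (N + 1) → ℝ} (hy : Generic V y) (j : Fin (N + 1)) (x : Fin (N + 1) → Fin N → ℤ) :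
    sind (N + 1) (fun t => V (x t)) y = ∑ i : Fin (N + 1), (-1 : ℤ) ^ (i : ℕ) *
      sind (N + 1) (Fin.cons (Pi.single j 1) fun t => V (x (i.succAbove t))) y := by
  have hWmem : ∀ i, (∃ m, (Fin.cons (Pi.single j 1) fun t => V (x t) :
      Fin (N + 2) → Fin (N + 1) → ℝ) i = V m) ∨
      ∃ k, (Fin.cons (Pi.single j 1) fun t => V (x t) :
      Fin (N + 2) → Fin (N + 1) → ℝ) i = Pi.single k 1 := by
    intro i
    refine Fin.cases ?_ (fun i => ?_) i
    · exact Or.inr ⟨j, by simp⟩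
    · exact Or.inl ⟨x i, by simp⟩
  have := sind_cocycle (Fin.cons (Pi.single j 1) fun t => V (x t)) (fun i => ?_) y ?_
  · rw [Fin.sum_univ_succ] at this
    simp only [Fin.val_zero, pow_zero, one_mul, Fin.succAbove_zero, Fin.cons_succ, Fin.val_succ,
      pow_succ, mul_neg, mul_one, neg_mul, Finset.sum_neg_distrib] at this
    rw [← sub_eq_add_neg, sub_eq_zero] at this
    rw [this]
    refine Finset.sum_congr rfl fun i _ => ?_
    congr 2
    funext t
    refine Fin.cases ?_ (fun t => ?_) t <;> simp
  · refine Fin.cases ?_ (fun i => ?_) i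
    · simp
    · simpa using Finset.sum_pos (fun k _ => hV (x i) k) ⟨0, Finset.mem_univ _⟩
  · intro p q hpq a hap haq hya
    obtain ⟨q, rfl⟩ := Fin.exists_succAbove_eq hpq.symm
    rw [Fin.sum_univ_succAbove _ p, hap, zero_smul, zero_add, Fin.sum_univ_succAbove _ q, haq,
      zero_smul, zero_add] at hya
    exact hy _ (fun t => hWmem (p.succAbove (q.succAbove t))) _ hya

/-- Within one slab only finitely many of the cones joining a facet to `e_j` contain `y`. -/
lemma finite_slab {M : ℕ} {ℓ : Fin (M + 1) → Fin (M + 2) → ℝ} {j : Fin (M + 2)}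
    (hℓ : LogIndep fun (k : Fin M) i => ℓ k.succ (j.succAbove i))
    {V : (Fin (M + 1) → ℤ) → Fin (M + 2) → ℝ} (hV : ∀ m i, 0 < V m i) {B : ℝ}
    (hB : ∀ m i, |Real.log (V m i) - ∑ k, (m k : ℝ) * ℓ k i| ≤ B)
    (y : Fin (M + 2) → ℝ) (a : ℤ) (τ : Equiv.Perm (Fin (M + 1))) (i : Fin (M + 2)) :
    (Function.support fun m : Fin M → ℤ => sind (M + 2) (Fin.cons (Pi.single j 1) fun t =>
      V (path (Fin.cons a m : Fin (M + 1) → ℤ) τ (i.succAbove t))) y).Finite := by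
  refine (finite_near hℓ (fun i => Real.log (y (j.succAbove i)) - a * ℓ 0 (j.succAbove i))
    (B + ∑ s, ∑ i, |ℓ s i|)).subset ?_
  intro m hm
  have hmem : y ∈ openCone (M + 2) (M + 2) (Fin.cons (Pi.single j 1) fun t =>
      V (path (Fin.cons a m : Fin (M + 1) → ℤ) τ (i.succAbove t)) :
        Fin (M + 2) → Fin (M + 2) → ℝ) := by
    by_contra hcon
    exact hm (by simp [sind, hcon])
  obtain ⟨c, hc, hyc, -⟩ := (mem_openCone_cons j _ y).1 hmem
  obtain ⟨s, hs⟩ := log_est (fun t i' =>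
    V (path (Fin.cons a m : Fin (M + 1) → ℤ) τ (i.succAbove t)) (j.succAbove i'))
    (fun t i => hV _ _)
    (fun i' => ∑ k, ((Fin.cons a m : Fin (M + 1) → ℤ) k : ℝ) * ℓ k (j.succAbove i')) _
    (fun t i' => vertex_est hB (Fin.cons a m) τ (i.succAbove t) (j.succAbove i')) c hc
  refine ⟨s, fun i' => ?_⟩
  have h1 := hs i'
  rw [← hyc, Fin.sum_univ_succ] at h1
  simp only [Fin.cons_zero, Fin.cons_succ] at h1
  convert h1 using 2
  ring

/-- Above or below a fixed point of the projection along `e_j`, the image of the hyperplane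
`m 0 = a` has height `exp (a r)` up to a bounded factor, for some `r ≠ 0`. -/
lemma layer_height {M : ℕ} {ℓ : Fin (M + 1) → Fin (M + 2) → ℝ}
    {V : (Fin (M + 1) → ℤ) → Fin (M + 2) → ℝ} (hV : ∀ m i, 0 < V m i) {B : ℝ}
    (hB : ∀ m i, |Real.log (V m i) - ∑ k, (m k : ℝ) * ℓ k i| ≤ B)
    {f : Fin (M + 2) → ℝ} (hf1 : ∑ i, f i = 0) (hf2 : ∀ k : Fin M, ∑ i, f i * ℓ k.succ i = 0)
    {j : Fin (M + 2)} (hj : f j ≠ 0) (y : Fin (M + 2) → ℝ) :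
    ∃ C : ℝ, ∀ (a : ℤ) (m : Fin M → ℤ) (τ : Equiv.Perm (Fin M)) (c : Fin (M + 1) → ℝ),
      (∀ t, 0 < c t) →
      (∀ i, y (j.succAbove i) = ∑ t, c t * V (Fin.cons a (path m τ t)) (j.succAbove i)) →
      |Real.log (∑ t, c t * V (Fin.cons a (path m τ t)) j) - a * ((∑ i, f i * ℓ 0 i) / f j)| ≤ C
    := by
  set B' : ℝ := B + ∑ s : Fin M, ∑ i, |ℓ s.succ i| with hB'
  set Y : ℝ := ∑ i, f (j.succAbove i) * Real.log (y (j.succAbove i)) with hY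
  refine ⟨(B' * ∑ i, |f i| + |Y|) / |f j|, fun a m τ c hc hyc => ?_⟩
  have hest : ∀ (t : Fin (M + 1)) i, |Real.log (V (Fin.cons a (path m τ t)) i) -
      (a * ℓ 0 i + ∑ k : Fin M, (m k : ℝ) * ℓ k.succ i)| ≤ B' := by
    intro t i
    have h1 := hB (Fin.cons a (path m τ t)) i
    have h2 := path_est (fun k : Fin M => ℓ k.succ) m τ t i
    rw [Fin.sum_univ_succ] at h1
    simp only [Fin.cons_zero, Fin.cons_succ] at h1
    rw [abs_le] at *
    constructor <;> linarith [h1.1, h1.2, h2.1, h2.2]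
  obtain ⟨s, hs⟩ := log_est (fun t => V (Fin.cons a (path m τ t))) (fun t i => hV _ i) _ B' hest
    c hc
  set z : Fin (M + 2) → ℝ := fun i => ∑ t, c t * V (Fin.cons a (path m τ t)) i with hz
  have h1 : |∑ i, f i * (Real.log (z i) - s -
      (a * ℓ 0 i + ∑ k : Fin M, (m k : ℝ) * ℓ k.succ i))| ≤ B' * ∑ i, |f i| := by
    refine (Finset.abs_sum_le_sum_abs _ _).trans ?_
    rw [Finset.mul_sum]
    refine Finset.sum_le_sum fun i _ => ?_
    rw [abs_mul, mul_comm]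
    exact mul_le_mul_of_nonneg_right (hs i) (abs_nonneg _)
  have h2 : ∑ i, f i * (Real.log (z i) - s -
      (a * ℓ 0 i + ∑ k : Fin M, (m k : ℝ) * ℓ k.succ i)) =
      f j * (Real.log (z j) - a * ((∑ i, f i * ℓ 0 i) / f j)) + Y := by
    have e1 : ∑ i, f i * (∑ k : Fin M, (m k : ℝ) * ℓ k.succ i) = 0 := by
      simp only [Finset.mul_sum]
      rw [Finset.sum_comm]
      refine Finset.sum_eq_zero fun k _ => ?_
      calc _ = m k * ∑ i, f i * ℓ k.succ i := by
            rw [Finset.mul_sum]; exact Finset.sum_congr rfl fun i _ => by ring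
        _ = 0 := by rw [hf2, mul_zero]
    have e2 : ∑ i, f i * Real.log (z i) = f j * Real.log (z j) + Y := by
      rw [Fin.sum_univ_succAbove _ j]
      simp only [hY, hyc, hz]
    have e3 : ∑ i, f i * (a * ℓ 0 i) = a * ∑ i, f i * ℓ 0 i := by
      rw [Finset.mul_sum]; exact Finset.sum_congr rfl fun i _ => by ring
    simp only [mul_sub, mul_add, Finset.sum_sub_distrib, Finset.sum_add_distrib, e1, e2, e3]
    rw [← Finset.sum_mul, hf1]
    field_simp
    ring
  rw [h2] at h1
  rw [le_div_iff₀ (abs_pos.2 hj), mul_comm, ← abs_mul]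
  have h3 := abs_sub_abs_le_abs_sub
    (f j * (Real.log (z j) - a * ((∑ i, f i * ℓ 0 i) / f j))) (-Y)
  rw [sub_neg_eq_add, abs_neg] at h3
  linarith

lemma sum_Ico_telescope (g : ℤ → ℤ) (A : ℕ) :
    ∑ a ∈ Finset.Ico (-(A : ℤ)) A, (g (a + 1) - g a) = g A - g (-A) := by
  have h : ∀ (n : ℕ) (b : ℤ), ∑ a ∈ Finset.Ico b (b + n), (g (a + 1) - g a) = g (b + n) - g b := by
    intro n b
    induction n with
    | zero => simp
    | succ n ih =>
      have : Finset.Ico b (b + (n + 1 : ℕ)) = insert (b + (n : ℤ)) (Finset.Ico b (b + n)) := by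
        ext x; simp; omega
      rw [this, Finset.sum_insert (by simp), ih]
      push_cast
      rw [← add_assoc]
      ring
  have := h (2 * A) (-A)
  have e : -(A : ℤ) + (2 * A : ℕ) = A := by push_cast; ring
  rwa [e] at this

lemma finsum_cons {M : ℕ} (g : (Fin (M + 1) → ℤ) → ℤ) (hg : (Function.support g).Finite) :
    ∑ᶠ m, g m = ∑ᶠ a : ℤ, ∑ᶠ m : Fin M → ℤ, g (Fin.cons a m) := by
  rw [← finsum_comp_equiv (Fin.consEquiv fun _ => ℤ)]
  rw [finsum_curry]
  · rfl
  · exact hg.preimage ((Fin.consEquiv fun _ => ℤ).injective.injOn)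

/-- If `y` lies above the whole layer in direction `e_j`, the layer contributes, up to sign, the
signed count of the configuration projected along `e_j`. -/
lemma layer_above {M : ℕ} {V : (Fin (M + 1) → ℤ) → Fin (M + 2) → ℝ} {y : Fin (M + 2) → ℝ}
    (j : Fin (M + 2)) (a : ℤ)
    (h : ∀ (m : Fin M → ℤ) (τ : Equiv.Perm (Fin M)) (c : Fin (M + 1) → ℝ),
      (∀ t, 0 < c t) →
      (∀ i, y (j.succAbove i) = ∑ t, c t * V (Fin.cons a (path m τ t)) (j.succAbove i)) →
      ∑ t, c t * V (Fin.cons a (path m τ t)) j < y j) :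
    layer (fun w => sind (M + 2) (Fin.cons (Pi.single j 1) fun t => V (w t)) y) a =
      (-1) ^ (j : ℕ) * count (fun (m : Fin M → ℤ) i => V (Fin.cons a m) (j.succAbove i))
        (fun i => y (j.succAbove i)) := by
  unfold layer count
  rw [Finset.mul_sum]
  refine Finset.sum_congr rfl fun τ _ => ?_
  rw [mul_left_comm, ← smul_eq_mul ((-1 : ℤ) ^ (j : ℕ)), smul_finsum]
  congr 1
  refine finsum_congr fun m => ?_
  rw [smul_eq_mul]
  exact sind_cons_above j _ _ (h m τ)

/-- If `y` lies below the whole layer in direction `e_j`, the layer contributes nothing. -/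
lemma layer_below {M : ℕ} {V : (Fin (M + 1) → ℤ) → Fin (M + 2) → ℝ} {y : Fin (M + 2) → ℝ}
    (j : Fin (M + 2)) (a : ℤ)
    (h : ∀ (m : Fin M → ℤ) (τ : Equiv.Perm (Fin M)) (c : Fin (M + 1) → ℝ),
      (∀ t, 0 < c t) →
      (∀ i, y (j.succAbove i) = ∑ t, c t * V (Fin.cons a (path m τ t)) (j.succAbove i)) →
      y j < ∑ t, c t * V (Fin.cons a (path m τ t)) j) :
    layer (fun w => sind (M + 2) (Fin.cons (Pi.single j 1) fun t => V (w t)) y) a = 0 := by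
  unfold layer
  refine Finset.sum_eq_zero fun τ _ => ?_
  have : ∀ m : Fin M → ℤ, sind (M + 2) (Fin.cons (Pi.single j 1) fun t =>
      V (Fin.cons a (path m τ t))) y = 0 := fun m => sind_cons_below j _ _ (h m τ)
  simp [this]

/-- Replacing each cone by the cones joining its facets to `e_j` and summing over all slabs between
two hyperplanes `m 0 = ±A`, everything cancels but the contributions of the two hyperplanes. -/
lemma count_eq_layers {M : ℕ} {ℓ : Fin (M + 1) → Fin (M + 2) → ℝ} (hℓ : LogIndep ℓ)
    {j : Fin (M + 2)} (hℓ' : LogIndep fun (k : Fin M) i => ℓ k.succ (j.succAbove i))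
    {V : (Fin (M + 1) → ℤ) → Fin (M + 2) → ℝ} (hV : ∀ m i, 0 < V m i) {B : ℝ}
    (hB : ∀ m i, |Real.log (V m i) - ∑ k, (m k : ℝ) * ℓ k i| ≤ B)
    {y : Fin (M + 2) → ℝ} (hgen : Generic V y) :
    ∃ A₀ : ℕ, ∀ A : ℕ, A₀ ≤ A → count V y =
      layer (fun w => sind (M + 2) (Fin.cons (Pi.single j 1) fun t => V (w t)) y) A -
      layer (fun w => sind (M + 2) (Fin.cons (Pi.single j 1) fun t => V (w t)) y) (-A) := by
  set G : (Fin (M + 1) → Fin (M + 1) → ℤ) → ℤ :=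
    fun w => sind (M + 2) (Fin.cons (Pi.single j 1) fun t => V (w t)) y with hG
  have hfin := finite_cones hℓ hV hB (fun i => Real.log (y i)) 0
  set R := {m : Fin (M + 1) → ℤ | ∃ (τ : Equiv.Perm (Fin (M + 1))) (y' : Fin (M + 2) → ℝ),
      (∀ i, |Real.log (y' i) - Real.log (y i)| ≤ 0) ∧
      y' ∈ openCone (M + 2) (M + 2) (fun t => V (path m τ t))} with hR
  have hsupp : ∀ m, m ∉ R → ∀ τ, sind (M + 2) (fun t => V (path m τ t)) y = 0 := by
    intro m hm τ
    unfold sind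
    rw [if_neg]
    intro hmem
    exact hm ⟨τ, y, fun i => by simp, hmem⟩
  obtain ⟨A₀, hA₀⟩ : ∃ A₀ : ℕ, ∀ m ∈ R, (m 0).natAbs < A₀ := by
    obtain ⟨A₀, hA₀⟩ := (hfin.image fun m => (m 0).natAbs).bddAbove
    exact ⟨A₀ + 1, fun m hm => Nat.lt_succ_of_le (hA₀ ⟨m, hm, rfl⟩)⟩
  refine ⟨A₀, fun A hA => ?_⟩
  rw [← sum_Ico_telescope]
  simp only [← slab_boundary]
  rw [Finset.sum_comm]
  unfold count
  refine Finset.sum_congr rfl fun τ _ => ?_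
  rw [← Finset.mul_sum, finsum_cons]
  swap
  · exact hfin.subset fun m hm => by
      by_contra hcon
      exact hm (hsupp m hcon τ)
  rw [finsum_eq_sum_of_support_subset (s := Finset.Ico (-(A : ℤ)) A)]
  swap
  · intro a ha
    by_contra hcon
    apply ha
    have : ∀ m : Fin M → ℤ,
        sind (M + 2) (fun t => V (path (Fin.cons a m : Fin (M + 1) → ℤ) τ t)) y = 0 := by
      intro m
      apply hsupp
      intro hm
      have := hA₀ _ hm
      simp only [Fin.cons_zero] at this
      apply hcon
      simp only [Finset.coe_Ico, Set.mem_Ico]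
      omega
    simp [this]
  congr 1
  refine Finset.sum_congr rfl fun a _ => ?_
  unfold facetSum
  simp only [hG, ← smul_eq_mul]
  simp only [smul_finsum]
  rw [← finsum_sum_comm]
  · refine finsum_congr fun m => ?_
    simp only [smul_eq_mul]
    exact sind_expand hV hgen j _
  · intro i _
    refine (finite_slab hℓ' hV hB y a τ i).subset ?_
    intro m hm h0
    exact hm (by simp only [h0, smul_zero])

/-- The degree computation: the signed number of cones over a generic point is `±1`.  By induction
on the dimension: on one far layer the signed count is that of the projected configuration, on the
opposite one it is zero. -/
theorem count_eq_one_or {N : ℕ} : ∀ {ℓ : Fin N → Fin (N + 1) → ℝ} (_ : LogIndep ℓ)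
    {V : (Fin N → ℤ) → Fin (N + 1) → ℝ} (_ : ∀ m i, 0 < V m i) {B : ℝ}
    (_ : ∀ m i, |Real.log (V m i) - ∑ k, (m k : ℝ) * ℓ k i| ≤ B)
    {y : Fin (N + 1) → ℝ} (_ : ∀ i, 0 < y i) (_ : Generic V y),
    count V y = 1 ∨ count V y = -1 := by
  induction N with
  | zero =>
    intro ℓ hℓ V hV B hB y hy hgen
    left
    have h1 : ∀ m τ, sind 1 (fun t => V (path m τ t)) y = 1 := by
      intro m τ
      unfold sind
      rw [if_pos]
      · rw [Matrix.det_fin_one]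
        simp [sign_pos (hV _ _)]
      · refine ⟨fun _ => y 0 / V (path m τ 0) 0, fun t => div_pos (hy 0) (hV _ 0), ?_⟩
        funext i
        obtain rfl : i = 0 := Fin.ext (by omega)
        have := (hV (path m τ 0) 0).ne'
        simp [this]
    unfold count
    rw [Fintype.sum_unique, finsum_unique, h1]
    simp
  | succ M ih =>
    intro ℓ hℓ V hV B hB y hy hgen
    obtain ⟨f, hf1, hf2, hf3⟩ := exists_functional hℓ
    obtain ⟨j, hj⟩ : ∃ j, f j ≠ 0 := by
      by_contra! hcon
      exact hf3 (by simp [hcon])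
    have hℓ' := logIndep_proj hℓ hf1 hf2 hj
    obtain ⟨C, hC⟩ := layer_height hV hB hf1 hf2 hj y
    set r : ℝ := (∑ i, f i * ℓ 0 i) / f j with hr
    have hr0 : r ≠ 0 := div_ne_zero hf3 hj
    obtain ⟨A₀, hA₀⟩ := count_eq_layers hℓ hℓ' hV hB hgen
    obtain ⟨A₁, hA₁⟩ := exists_nat_gt ((C + |Real.log (y j)|) / |r|)
    rw [div_lt_iff₀ (abs_pos.2 hr0)] at hA₁
    set A := max A₀ A₁ with hA
    have hAr : C + |Real.log (y j)| < A * |r| :=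
      hA₁.trans_le (mul_le_mul_of_nonneg_right (by exact_mod_cast le_max_right _ _)
        (abs_nonneg r))
    rw [hA₀ A (le_max_left _ _)]
    have hzpos : ∀ (a : ℤ) (m : Fin M → ℤ) (τ : Equiv.Perm (Fin M)) (c : Fin (M + 1) → ℝ),
        (∀ t, 0 < c t) → 0 < ∑ t, c t * V (Fin.cons a (path m τ t)) j := fun a m τ c hc =>
      Finset.sum_pos (fun t _ => mul_pos (hc t) (hV _ _)) ⟨0, Finset.mem_univ _⟩
    -- a layer whose height is small lies below `y`, one whose height is large lies above
    have habove : ∀ a : ℤ, a * r < -(C + |Real.log (y j)|) →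
        layer (fun w => sind (M + 2) (Fin.cons (Pi.single j 1) fun t => V (w t)) y) a = 1 ∨
        layer (fun w => sind (M + 2) (Fin.cons (Pi.single j 1) fun t => V (w t)) y) a = -1 := by
      intro a ha
      rw [layer_above j a fun m τ c hc hyc => ?_]
      · have := ih hℓ' (V := fun (m : Fin M → ℤ) i => V (Fin.cons a m) (j.succAbove i))
          (fun m i => hV _ _) (B := B + ∑ i, |a * ℓ 0 i|) (fun m i => ?_)
          (y := fun i => y (j.succAbove i)) (fun i => hy _) (hgen.proj j a)
        · rcases neg_one_pow_eq_or ℤ (j : ℕ) with h | h <;> rcases this with h' | h' <;>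
            simp [h, h']
        · have h1 := hB (Fin.cons a m) (j.succAbove i)
          rw [Fin.sum_univ_succ] at h1
          simp only [Fin.cons_zero, Fin.cons_succ] at h1
          have h2 := Finset.single_le_sum (f := fun i => |a * ℓ 0 i|) (fun _ _ => abs_nonneg _)
            (Finset.mem_univ (j.succAbove i))
          have h3 := abs_le.1 h2
          rw [abs_le] at *
          constructor <;> linarith [h1.1, h1.2, h3.1, h3.2]
      · rw [← Real.log_lt_log_iff (hzpos a m τ c hc) (hy j)]
        have h1 := (abs_le.1 (hC a m τ c hc hyc)).2
        have h2 := neg_abs_le (Real.log (y j))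
        linarith
    have hbelow : ∀ a : ℤ, C + |Real.log (y j)| < a * r →
        layer (fun w => sind (M + 2) (Fin.cons (Pi.single j 1) fun t => V (w t)) y) a = 0 := by
      intro a ha
      refine layer_below j a fun m τ c hc hyc => ?_
      rw [← Real.log_lt_log_iff (hy j) (hzpos a m τ c hc)]
      have h1 := (abs_le.1 (hC a m τ c hc hyc)).1
      have h2 := le_abs_self (Real.log (y j))
      linarith
    rcases lt_or_gt_of_ne hr0 with hneg | hpos
    · rw [abs_of_neg hneg] at hAr
      rw [hbelow (-A) (by push_cast; linarith)]
      simpa using habove A (by push_cast; linarith)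
    · rw [abs_of_pos hpos] at hAr
      rw [hbelow A (by push_cast; linarith)]
      rcases habove (-A) (by push_cast; linarith) with h | h <;> simp [h]

/-! ### From generic points to half-open cones -/

section

open Filter Topology MeasureTheory

/-- Non-generic points lie on countably many hyperplanes, hence form a null set. -/
lemma dense_generic {N : ℕ} (V : (Fin N → ℤ) → Fin (N + 1) → ℝ) : Dense {y | Generic V y} := by
  have hnull : ∀ g : Fin N → (Fin N → ℤ) ⊕ Fin (N + 1), ∀ᵐ y : Fin (N + 1) → ℝ,
      y ∉ Submodule.span ℝ (Set.range fun t =>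
        (Sum.elim V (fun i => Pi.single i 1) (g t) : Fin (N + 1) → ℝ)) := by
    intro g
    refine MeasureTheory.measure_eq_zero_iff_ae_notMem.1
      (MeasureTheory.Measure.addHaar_submodule MeasureTheory.volume _ fun htop => ?_)
    have h1 := finrank_range_le_card (R := ℝ) fun t =>
        (Sum.elim V (fun i => Pi.single i 1) (g t) : Fin (N + 1) → ℝ)
    rw [Set.finrank, htop, finrank_top] at h1
    simp at h1
  refine (MeasureTheory.Measure.dense_of_ae (ae_all_iff.2 hnull)).mono fun y hy w hw c hyc => ?_
  have : ∀ t, ∃ s : (Fin N → ℤ) ⊕ Fin (N + 1),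
      w t = Sum.elim V (fun i => Pi.single i 1) s := by
    intro t
    rcases hw t with ⟨m, hm⟩ | ⟨i, hi⟩
    · exact ⟨Sum.inl m, hm⟩
    · exact ⟨Sum.inr i, hi⟩
  choose g hg using this
  refine hy g ?_
  rw [hyc]
  refine Submodule.sum_mem _ fun t _ => Submodule.smul_mem _ _ (Submodule.subset_span ⟨t, ?_⟩)
  exact (hg t).symm

lemma mem_cbar_iff {n : ℕ} {α x : Fin n → ℝ} {v : Fin n → Fin n → ℝ} :
    x ∈ cbar n α v ↔ ∀ᶠ h : ℝ in 𝓝[>] 0, x + h • α ∈ openCone n n v := by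
  rw [Filter.Eventually, mem_nhdsGT_iff_exists_Ioo_subset]
  constructor
  · rintro ⟨h₀, hpos, h⟩
    exact ⟨h₀, hpos, fun t ht => h t ht.1 ht.2⟩
  · rintro ⟨h₀, hpos, h⟩
    exact ⟨h₀, hpos, fun t h1 h2 => h ⟨h1, h2⟩⟩

lemma eventually_sign (a b : ℝ) (hb : b ≠ 0) :
    (∀ᶠ h : ℝ in 𝓝[>] 0, 0 < a + h * b) ∨ ∀ᶠ h : ℝ in 𝓝[>] 0, a + h * b < 0 := by
  have hc : Tendsto (fun h : ℝ => a + h * b) (𝓝[>] 0) (𝓝 a) := by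
    have : Continuous fun h : ℝ => a + h * b := by fun_prop
    simpa using (this.tendsto 0).mono_left nhdsWithin_le_nhds
  rcases lt_trichotomy a 0 with ha | rfl | ha
  · exact Or.inr (hc.eventually (gt_mem_nhds ha))
  · rcases lt_or_gt_of_ne hb with hb | hb
    · exact Or.inr (eventually_mem_nhdsWithin.mono fun h hh => by
        simpa using mul_neg_of_pos_of_neg hh hb)
    · exact Or.inl (eventually_mem_nhdsWithin.mono fun h hh => by
        simpa using mul_pos hh hb)
  · exact Or.inl (hc.eventually (lt_mem_nhds ha))

/-- If `α` lies on no wall of the cone spanned by `v`, membership of `x` in `C̄_α` is decided by an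
open condition on points near `x + h α`, for small `h > 0`. -/
lemma cbar_stable {n : ℕ} {v : Fin n → Fin n → ℝ} (hv : (Matrix.of v).det ≠ 0) {α : Fin n → ℝ}
    (hα : ∀ c : Fin n → ℝ, α = ∑ t, c t • v t → ∀ t, c t ≠ 0) (x : Fin n → ℝ) :
    ∀ᶠ h : ℝ in 𝓝[>] 0, ∀ᶠ y in 𝓝 (x + h • α), (x ∈ cbar n α v ↔ y ∈ openCone n n v) := by
  choose co hco using coeff_exists hv
  have hcone : ∀ y, y ∈ openCone n n v ↔ ∀ t, 0 < co y t := by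
    intro y
    constructor
    · rintro ⟨c, hc, hy⟩
      rw [coeff_unique hv ((hco y).symm.trans hy)]
      exact hc
    · exact fun h => ⟨_, h, hco y⟩
  have hlin : ∀ y z (r : ℝ) t, co (y + r • z) t = co y t + r * co z t := by
    intro y z r t
    have : ∑ t, co (y + r • z) t • v t = ∑ t, (co y t + r * co z t) • v t := by
      rw [← hco]
      simp only [add_smul, mul_smul, Finset.sum_add_distrib, ← Finset.smul_sum, ← hco]
    exact congrFun (coeff_unique hv this) t
  have hcont : ∀ t, Continuous fun y => co y t := by
    intro t
    let f : (Fin n → ℝ) →ₗ[ℝ] ℝ :=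
      { toFun := fun y => co y t
        map_add' := fun y z => by simpa using hlin y z 1 t
        map_smul' := fun r z => by
          have h0 := hlin 0 0 1 t
          have := hlin 0 z r t
          simp only [smul_zero, zero_add, one_mul, RingHom.id_apply, smul_eq_mul] at *
          linarith }
    exact f.continuous_of_finiteDimensional
  by_cases hall : ∀ t, ∀ᶠ h : ℝ in 𝓝[>] 0, 0 < co x t + h * co α t
  · have hall' := eventually_all.2 hall
    have hx : x ∈ cbar n α v := by
      rw [mem_cbar_iff]
      filter_upwards [hall'] with h hh
      rw [hcone]
      simpa only [hlin] using hh
    filter_upwards [hall'] with h hh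
    have : ∀ᶠ y in 𝓝 (x + h • α), ∀ t, 0 < co y t :=
      eventually_all.2 fun t => (hcont t).continuousAt.eventually
        (lt_mem_nhds (by simpa only [hlin] using hh t))
    filter_upwards [this] with y hy
    simp only [hx, true_iff, hcone]
    exact hy
  · push Not at hall
    obtain ⟨t, ht⟩ := hall
    have hneg := (eventually_sign (co x t) (co α t) (hα _ (hco α) t)).resolve_left
      (by simpa using ht)
    have hx : x ∉ cbar n α v := by
      rw [mem_cbar_iff]
      intro hcon
      obtain ⟨h, h1, h2⟩ := (hcon.and hneg).exists
      have := (hcone _).1 h1 t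
      rw [hlin] at this
      linarith
    filter_upwards [hneg] with h hh
    have : ∀ᶠ y in 𝓝 (x + h • α), co y t < 0 :=
      (hcont t).continuousAt.eventually (gt_mem_nhds (by simpa only [hlin] using hh))
    filter_upwards [this] with y hy
    simp only [hx, false_iff, hcone, not_forall, not_lt]
    exact ⟨t, hy.le⟩

open Classical in
/-- When all simplices are positively oriented, `count` is an honest number of cones, so a generic
point lies in exactly one of them. -/
lemma existsUnique_generic {N : ℕ} {ℓ : Fin N → Fin (N + 1) → ℝ} (hℓ : LogIndep ℓ)
    {V : (Fin N → ℤ) → Fin (N + 1) → ℝ} (hV : ∀ m i, 0 < V m i) {B : ℝ}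
    (hB : ∀ m i, |Real.log (V m i) - ∑ k, (m k : ℝ) * ℓ k i| ≤ B)
    (hor : ∀ m τ, (SignType.sign (Matrix.of fun t => V (path m τ t)).det : ℤ) =
      (Equiv.Perm.sign τ : ℤ))
    {y : Fin (N + 1) → ℝ} (hy : ∀ i, 0 < y i) (hgen : Generic V y) :
    ∃! p : (Fin N → ℤ) × Equiv.Perm (Fin N),
      y ∈ openCone (N + 1) (N + 1) (fun t => V (path p.1 p.2 t)) := by
  have hfin := finite_cones hℓ hV hB (fun i => Real.log (y i)) 0
  set R := hfin.toFinset with hR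
  have hmemR : ∀ m τ, y ∈ openCone (N + 1) (N + 1) (fun t => V (path m τ t)) → m ∈ R := by
    intro m τ h
    rw [hR, Set.Finite.mem_toFinset]
    exact ⟨τ, y, fun i => by simp, h⟩
  set T := (R ×ˢ (Finset.univ : Finset (Equiv.Perm (Fin N)))).filter fun p =>
    y ∈ openCone (N + 1) (N + 1) (fun t => V (path p.1 p.2 t)) with hT
  have hcount : count V y = (T.card : ℤ) := by
    rw [hT, Finset.card_filter, Finset.sum_product_right]
    unfold count
    push_cast
    refine Finset.sum_congr rfl fun τ _ => ?_
    rw [finsum_eq_sum_of_support_subset (s := R), Finset.mul_sum]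
    · refine Finset.sum_congr rfl fun m _ => ?_
      rw [sind]
      split_ifs
      · rw [hor, ← Units.val_mul, Int.units_mul_self, Units.val_one]
      · simp
    · intro m hm
      refine hmemR m τ ?_
      by_contra hcon
      exact hm (by simp [sind, hcon])
  have hcard : T.card = 1 := by
    rcases count_eq_one_or hℓ hV hB hy hgen with h | h <;> omega
  obtain ⟨p, hp⟩ := Finset.card_eq_one.1 hcard
  have hiff : ∀ q, q ∈ T ↔ y ∈ openCone (N + 1) (N + 1) (fun t => V (path q.1 q.2 t)) := by
    intro q
    rw [hT, Finset.mem_filter, and_iff_right_iff_imp]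
    intro h
    exact Finset.mem_product.2 ⟨hmemR _ _ h, Finset.mem_univ _⟩
  refine ⟨p, (hiff p).1 (by simp [hp]), fun q hq => ?_⟩
  simpa [hp] using (hiff q).2 hq

/-- The half-open cones `C̄_α` attached to a positively oriented triangulation partition the
positive orthant. -/
lemma existsUnique_cbar {N : ℕ} {ℓ : Fin N → Fin (N + 1) → ℝ} (hℓ : LogIndep ℓ)
    {V : (Fin N → ℤ) → Fin (N + 1) → ℝ} (hV : ∀ m i, 0 < V m i) {B : ℝ}
    (hB : ∀ m i, |Real.log (V m i) - ∑ k, (m k : ℝ) * ℓ k i| ≤ B)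
    (hor : ∀ m τ, (SignType.sign (Matrix.of fun t => V (path m τ t)).det : ℤ) =
      (Equiv.Perm.sign τ : ℤ))
    {α : Fin (N + 1) → ℝ}
    (hα : ∀ m τ (c : Fin (N + 1) → ℝ), α = ∑ t, c t • V (path m τ t) → ∀ t, c t ≠ 0)
    {x : Fin (N + 1) → ℝ} (hx : ∀ i, 0 < x i) :
    ∃! p : (Fin N → ℤ) × Equiv.Perm (Fin N),
      x ∈ cbar (N + 1) α (fun t => V (path p.1 p.2 t)) := by
  have hfin := finite_cones hℓ hV hB (fun i => Real.log (x i)) 1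
  have hdet : ∀ m τ, (Matrix.of fun t => V (path m τ t)).det ≠ 0 := by
    intro m τ h0
    have := hor m τ
    rw [h0, sign_zero] at this
    exact (Equiv.Perm.sign τ).ne_zero (by simpa using this.symm)
  -- near `x` only the finitely many cones in `hfin` matter
  have hnear : ∀ᶠ y in 𝓝 x, (∀ i, 0 < y i) ∧ ∀ i, |Real.log (y i) - Real.log (x i)| ≤ 1 := by
    refine (eventually_all.2 fun i => ?_).and (eventually_all.2 fun i => ?_)
    · exact (continuous_apply i).continuousAt.eventually (lt_mem_nhds (hx i))
    · have hc : ContinuousAt (fun y : Fin (N + 1) → ℝ => |Real.log (y i) - Real.log (x i)|) x :=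
        ((ContinuousAt.log (f := fun y : Fin (N + 1) → ℝ => y i)
          (continuous_apply i).continuousAt (hx i).ne').sub continuousAt_const).abs
      have h01 : |Real.log (x i) - Real.log (x i)| < 1 := by simp
      exact (hc.eventually (gt_mem_nhds h01)).mono fun y (hy : _ < _) => hy.le
  have hα0 : Tendsto (fun h : ℝ => x + h • α) (𝓝[>] 0) (𝓝 x) := by
    have : Continuous fun h : ℝ => x + h • α := by fun_prop
    simpa using (this.tendsto 0).mono_left nhdsWithin_le_nhds
  have hbig : ∀ m τ y, (∀ i, |Real.log (y i) - Real.log (x i)| ≤ 1) →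
      y ∈ openCone (N + 1) (N + 1) (fun t => V (path m τ t)) → m ∈ hfin.toFinset :=
    fun m τ y h1 h2 => hfin.mem_toFinset.2 ⟨τ, y, h1, h2⟩
  have hstab : ∀ᶠ h : ℝ in 𝓝[>] 0, ∀ᶠ y in 𝓝 (x + h • α), ∀ m ∈ hfin.toFinset, ∀ τ,
      (x ∈ cbar (N + 1) α (fun t => V (path m τ t)) ↔
        y ∈ openCone (N + 1) (N + 1) (fun t => V (path m τ t))) := by
    have h1 : ∀ m ∈ hfin.toFinset, ∀ᶠ h : ℝ in 𝓝[>] 0, ∀ τ, ∀ᶠ y in 𝓝 (x + h • α),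
        (x ∈ cbar (N + 1) α (fun t => V (path m τ t)) ↔
        y ∈ openCone (N + 1) (N + 1) (fun t => V (path m τ t))) :=
      fun m _ => eventually_all.2 fun τ => cbar_stable (hdet m τ) (hα m τ) x
    filter_upwards [(Filter.eventually_all_finset _).2 h1] with h hh
    exact (Filter.eventually_all_finset _).2 fun m hm => eventually_all.2 (hh m hm)
  obtain ⟨h, hh1, hh2⟩ := (hstab.and (hα0.eventually hnear.eventually_nhds)).exists
  obtain ⟨y, hygen, hystab, hypos, hylog⟩ :=
    ((dense_generic V).inter_nhds_nonempty (hh1.and hh2)).imp fun y hy => hy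
  have hiff : ∀ p : (Fin N → ℤ) × Equiv.Perm (Fin N),
      x ∈ cbar (N + 1) α (fun t => V (path p.1 p.2 t)) ↔
        y ∈ openCone (N + 1) (N + 1) (fun t => V (path p.1 p.2 t)) := by
    rintro ⟨m, τ⟩
    by_cases hm : m ∈ hfin.toFinset
    · exact hystab m hm τ
    · refine iff_of_false (fun hcon => hm ?_) fun hcon => hm (hbig m τ y hylog hcon)
      obtain ⟨h, h1, h2⟩ := ((mem_cbar_iff.1 hcon).and (hα0.eventually hnear)).exists
      exact hbig m τ _ h2.2 h1
  simp only [hiff]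
  exact existsUnique_generic hℓ hV hB hor hypos hygen

end

/-! ### Arithmetic input -/

section

open NumberField NumberField.InfinitePlace

variable {N : ℕ} {F : Type} [Field F] [NumberField F] {σ : Fin (N + 1) → (F →+* ℝ)}

lemma embeddings_bijective (hdeg : Module.finrank ℚ F = N + 1) (hinj : Function.Injective σ) :
    Function.Bijective fun i => Complex.ofRealHom.comp (σ i) := by
  rw [Fintype.bijective_iff_injective_and_card]
  refine ⟨fun i j h => hinj (RingHom.ext fun x => ?_), ?_⟩
  · have := RingHom.congr_fun h x
    simpa using this
  · rw [NumberField.Embeddings.card, hdeg, Fintype.card_fin]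

lemma trace_eq_sum (hdeg : Module.finrank ℚ F = N + 1) (hinj : Function.Injective σ) (x : F) :
    ((Algebra.trace ℚ F x : ℚ) : ℝ) = ∑ i, σ i x := by
  have h1 := trace_eq_sum_embeddings (K := ℚ) ℂ (x := x)
  rw [← Fintype.sum_equiv (RingHom.equivRatAlgHom F ℂ) (fun f => f x) (fun φ => φ x)
    fun _ => by simp [RingHom.equivRatAlgHom_apply]] at h1
  rw [← Function.Bijective.sum_comp (embeddings_bijective hdeg hinj)] at h1
  have h2 : (((Algebra.trace ℚ F x : ℚ) : ℝ) : ℂ) = ((∑ i, σ i x : ℝ) : ℂ) := by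
    push_cast
    simpa using h1
  exact_mod_cast h2

/-- The embeddings `σ` enumerate the archimedean places. -/
lemma places_bijective (hdeg : Module.finrank ℚ F = N + 1) (hinj : Function.Injective σ) :
    Function.Bijective fun i => InfinitePlace.mk (Complex.ofRealHom.comp (σ i)) := by
  have hb := embeddings_bijective hdeg hinj
  constructor
  · intro i j h
    rcases mk_eq_iff.1 h with h | h
    · exact hb.1 h
    · refine hb.1 (Eq.trans ?_ h)
      ext x
      simp [ComplexEmbedding.conjugate]
  · intro w
    obtain ⟨i, hi⟩ := hb.2 w.embedding
    exact ⟨i, by simp only [hi, mk_embedding]⟩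

lemma place_eq_abs {K : Type} [Field K] (φ : K →+* ℝ) (x : K) :
    InfinitePlace.mk (Complex.ofRealHom.comp φ) x = |φ x| := by
  simp [InfinitePlace.apply]

lemma place_mult (hdeg : Module.finrank ℚ F = N + 1) (hinj : Function.Injective σ)
    (w : InfinitePlace F) : w.mult = 1 := by
  obtain ⟨i, rfl⟩ := (places_bijective hdeg hinj).2 w
  exact mult_isReal ⟨_, ⟨_, by ext x; simp, rfl⟩⟩

lemma sum_log (hdeg : Module.finrank ℚ F = N + 1) (hinj : Function.Injective σ)
    (u : (𝓞 F)ˣ) : ∑ i, Real.log |σ i (uval F u)| = 0 := by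
  have h := Units.sum_mult_mul_log u
  rw [← Function.Bijective.sum_comp (places_bijective hdeg hinj)] at h
  simpa only [place_mult hdeg hinj, place_eq_abs, Nat.cast_one, one_mul] using! h

/-- A standard basis vector lies on no real hyperplane spanned by `N` elements of `F`: such a
hyperplane lies in the kernel of `Tr(y ·)` for some nonzero `y`, and `σ j y ≠ 0`. -/
lemma single_ne_sum (hdeg : Module.finrank ℚ F = N + 1) (hinj : Function.Injective σ)
    (u : Fin N → F) (c : Fin N → ℝ) (j : Fin (N + 1)) (r : ℝ) (hr : r ≠ 0) :
    (Pi.single j r : Fin (N + 1) → ℝ) ≠ ∑ s, c s • fun i => σ i (u s) := by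
  intro h
  let T : F →ₗ[ℚ] (Fin N → ℚ) :=
    LinearMap.pi fun s => (Algebra.trace ℚ F).comp (LinearMap.mulRight ℚ (u s))
  have hT : LinearMap.ker T ≠ ⊥ := LinearMap.ker_ne_bot_of_finrank_lt (by simp [hdeg])
  obtain ⟨y, hy, hy0⟩ := (Submodule.ne_bot_iff _).1 hT
  have h1 : ∀ s, ∑ i, σ i y * σ i (u s) = 0 := by
    intro s
    have h2 : Algebra.trace ℚ F (y * u s) = 0 := congrFun (LinearMap.mem_ker.1 hy) s
    have h3 := trace_eq_sum hdeg hinj (y * u s)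
    rw [h2] at h3
    simpa using h3.symm
  have h2 : ∑ i, σ i y * (Pi.single j r : Fin (N + 1) → ℝ) i = 0 := by
    rw [h]
    simp only [Finset.sum_apply, Pi.smul_apply, smul_eq_mul, Finset.mul_sum]
    rw [Finset.sum_comm]
    refine Finset.sum_eq_zero fun s _ => ?_
    rw [← mul_zero (c s), ← h1 s, Finset.mul_sum]
    exact Finset.sum_congr rfl fun i _ => by ring
  rw [Fintype.sum_eq_single j fun i hi => by simp [hi], Pi.single_eq_same] at h2
  exact mul_ne_zero ((map_ne_zero _).2 hy0) hr h2

/-- Every unit has a positive power in `E₊(𝔣)`: the group `(O_F/𝔣)ˣ` is finite and squares are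
totally positive. -/
lemma exists_pow_mem_totPos {𝔣 : Ideal (𝓞 F)} (h𝔣 : 𝔣 ≠ ⊥) (u : (𝓞 F)ˣ) :
    ∃ p : ℕ, 0 < p ∧ u ^ p ∈ totPosUnitsMod (N + 1) F σ 𝔣 := by
  have : Finite (𝓞 F ⧸ 𝔣) := Ideal.finiteQuotientOfFreeOfNeBot 𝔣 h𝔣
  set f := Units.map (Ideal.Quotient.mk 𝔣 : 𝓞 F →* 𝓞 F ⧸ 𝔣)
  have hk : 0 < orderOf (f u) := orderOf_pos _
  refine ⟨orderOf (f u) * 2, by omega, fun i => ?_, ?_⟩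
  · have : uval F (u ^ (orderOf (f u) * 2)) = (uval F (u ^ orderOf (f u))) ^ 2 := by
      simp [uval, pow_mul]
    rw [this, map_pow]
    have h0 : uval F (u ^ orderOf (f u)) ≠ 0 := by simp [uval]
    have h1 : σ i (uval F (u ^ orderOf (f u))) ≠ 0 := (map_ne_zero _).2 h0
    positivity
  · rw [← Ideal.Quotient.eq_zero_iff_mem, map_sub, sub_eq_zero]
    have := congrArg Units.val (pow_orderOf_eq_one (f u))
    simp only [f, Units.val_pow_eq_pow_val, Units.coe_map, Units.val_one] at this
    rw [Units.val_pow_eq_pow_val, pow_mul, map_pow, map_pow]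
    erw [this]
    rw [one_pow, map_one]

/-- Dirichlet's unit theorem for a subgroup of finite index: generators as numerous as the rank
have logarithms that are independent modulo `(1, …, 1)`. -/
lemma logIndep_units (hdeg : Module.finrank ℚ F = N + 1) (hinj : Function.Injective σ)
    {𝔣 : Ideal (𝓞 F)} (h𝔣 : 𝔣 ≠ ⊥) (ε : Fin N → totPosUnitsMod (N + 1) F σ 𝔣)
    (hV : (Subgroup.closure (Set.range ε)).FiniteIndex) :
    LogIndep fun k i => Real.log (σ i (uval F ↑(ε k))) := by
  classical
  set L : Fin N → Units.dirichletUnitTheorem.logSpace F :=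
    fun k => Units.logEmbedding F (Additive.ofMul (ε k : (𝓞 F)ˣ)) with hL
  have hcl : ∀ e ∈ Subgroup.closure (Set.range ε),
      Units.logEmbedding F (Additive.ofMul (e : (𝓞 F)ˣ)) ∈ Submodule.span ℝ (Set.range L) := by
    intro e he
    induction he using Subgroup.closure_induction with
    | mem x hx =>
      obtain ⟨k, rfl⟩ := hx
      exact Submodule.subset_span ⟨k, rfl⟩
    | one => simp
    | mul x y _ _ hx hy =>
      rw [Subgroup.coe_mul, ofMul_mul, map_add]
      exact Submodule.add_mem _ hx hy
    | inv x _ hx =>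
      rw [Subgroup.coe_inv, ofMul_inv, map_neg]
      exact Submodule.neg_mem _ hx
  have hspan : ⊤ ≤ Submodule.span ℝ (Set.range L) := by
    rw [← Units.dirichletUnitTheorem.unitLattice_span_eq_top, Submodule.span_le]
    rintro _ ⟨u, -, rfl⟩
    obtain ⟨p, hp, hup⟩ := exists_pow_mem_totPos (σ := σ) h𝔣 u.toMul
    obtain ⟨q, hq, -, huq⟩ := Subgroup.exists_pow_mem_of_index_ne_zero hV.index_ne_zero ⟨_, hup⟩
    have h1 := hcl _ huq
    have h2 : Units.logEmbedding F u = ((p * q : ℕ) : ℝ)⁻¹ •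
        Units.logEmbedding F (Additive.ofMul ((u.toMul ^ p) ^ q)) := by
      rw [← pow_mul, ofMul_pow, map_nsmul, ofMul_toMul, ← Nat.cast_smul_eq_nsmul ℝ, smul_smul,
        inv_mul_cancel₀ (by positivity), one_smul]
    rw [SetLike.mem_coe, AddMonoidHom.coe_toIntLinearMap, h2]
    exact Submodule.smul_mem _ _ h1
  have hcard : Fintype.card (Fin N) =
      Module.finrank ℝ (Units.dirichletUnitTheorem.logSpace F) := by
    rw [Units.finrank_eq_rank, Units.rank,
      ← Fintype.card_of_bijective (places_bijective hdeg hinj)]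
    simp
  have hind := linearIndependent_of_top_le_span_of_card_eq_finrank hspan hcard
  intro a b hab
  have hpos : ∀ k i, |σ i (uval F ↑(ε k))| = σ i (uval F ↑(ε k)) :=
    fun k i => abs_of_pos ((ε k).2.1 i)
  -- units have norm one, so summing over the places kills the left-hand side
  have hb : b = 0 := by
    have h1 : ∑ i, ∑ k, a k * Real.log (σ i (uval F ↑(ε k))) = ∑ i : Fin (N + 1), b :=
      Finset.sum_congr rfl fun i _ => hab i
    rw [Finset.sum_comm] at h1
    simp only [← Finset.mul_sum] at h1
    have h2 : ∀ k, ∑ i, Real.log (σ i (uval F ↑(ε k))) = 0 := fun k => by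
      simpa only [hpos] using sum_log hdeg hinj (ε k : (𝓞 F)ˣ)
    simp only [h2, mul_zero, Finset.sum_const_zero, Finset.sum_const, Finset.card_univ,
      Fintype.card_fin, nsmul_eq_mul] at h1
    rcases mul_eq_zero.1 h1.symm with h3 | h3
    · norm_cast at h3
    · exact h3
  refine funext (Fintype.linearIndependent_iff.1 hind a ?_)
  funext w
  obtain ⟨i, hi⟩ := (places_bijective hdeg hinj).2 w.1
  simp only [Finset.sum_apply, Pi.smul_apply, smul_eq_mul, hL,
    Units.dirichletUnitTheorem.logEmbedding_component, place_mult hdeg hinj, Nat.cast_one, one_mul,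
    Pi.zero_apply]
  rw [← hi]
  rw [← hb, ← hab i]
  exact Finset.sum_congr rfl fun k _ => congrArg (fun z => a k * Real.log z)
    ((place_eq_abs (σ i) _).trans (hpos k i))

end

/-! ### Translates of the chain cones by units -/

section

variable {N : ℕ} {F : Type} [Field F] [NumberField F] {σ : Fin (N + 1) → (F →+* ℝ)}
  {𝔣 : Ideal (NumberField.RingOfIntegers F)}

/-- The `i`-th coordinate of the embedding, as a character of `E₊(𝔣)`. -/
def coordChar (i : Fin (N + 1)) : totPosUnitsMod (N + 1) F σ 𝔣 →* ℝ where
  toFun u := σ i (uval F ↑u)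
  map_one' := by simp [uval]
  map_mul' u v := by simp [uval]

lemma coordChar_pos (i : Fin (N + 1)) (u : totPosUnitsMod (N + 1) F σ 𝔣) : 0 < coordChar i u := u.2.1 i

/-- The unit `ε₁^{m₁} ⋯ ε_N^{m_N}`. -/
def unitPow (ε : Fin N → totPosUnitsMod (N + 1) F σ 𝔣) (m : Fin N → ℤ) :
    totPosUnitsMod (N + 1) F σ 𝔣 := ∏ k, ε k ^ m k

lemma unitPow_mem (ε : Fin N → totPosUnitsMod (N + 1) F σ 𝔣) (m : Fin N → ℤ) :
    unitPow ε m ∈ Subgroup.closure (Set.range ε) :=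
  Subgroup.prod_mem _ fun k _ =>
    Subgroup.zpow_mem _ (Subgroup.subset_closure (Set.mem_range_self k)) _

lemma exists_unitPow {ε : Fin N → totPosUnitsMod (N + 1) F σ 𝔣}
    {e : totPosUnitsMod (N + 1) F σ 𝔣} (he : e ∈ Subgroup.closure (Set.range ε)) :
    ∃ m, e = unitPow ε m := by
  induction he using Subgroup.closure_induction with
  | mem x hx =>
    obtain ⟨k, rfl⟩ := hx
    refine ⟨Pi.single k 1, ?_⟩
    rw [unitPow, Fintype.prod_eq_single k fun s hs => by simp [hs]]
    simp
  | one => exact ⟨0, by simp [unitPow]⟩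
  | mul x y _ _ hx hy =>
    obtain ⟨m, rfl⟩ := hx
    obtain ⟨m', rfl⟩ := hy
    exact ⟨m + m', by simp [unitPow, zpow_add, Finset.prod_mul_distrib]⟩
  | inv x _ hx =>
    obtain ⟨m, rfl⟩ := hx
    exact ⟨-m, by simp [unitPow, zpow_neg, Finset.prod_inv_distrib]⟩

/-- The vertices of the simplex at `m` are the terms of the homogeneous chain, multiplied by
`ε^m`. -/
lemma unitPow_path (ε : Fin N → totPosUnitsMod (N + 1) F σ 𝔣) (m : Fin N → ℤ)
    (τ : Equiv.Perm (Fin N)) (t : Fin (N + 1)) :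
    unitPow ε (path m τ t) =
      unitPow ε m * ∏ s : Fin N, if (s : ℕ) < (t : ℕ) then ε (τ s) else 1 := by
  simp only [unitPow, path, zpow_add, Finset.prod_mul_distrib]
  congr 1
  rw [← Equiv.prod_comp τ]
  refine Finset.prod_congr rfl fun s _ => ?_
  rw [Equiv.symm_apply_apply]
  split_ifs <;> simp

/-- The embedded vertex `ε^m ∈ ℝ^n`. -/
def vertex (ε : Fin N → totPosUnitsMod (N + 1) F σ 𝔣) (m : Fin N → ℤ) : Fin (N + 1) → ℝ :=
  fun i => coordChar i (unitPow ε m)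

lemma vertex_path (ε : Fin N → totPosUnitsMod (N + 1) F σ 𝔣) (m : Fin N → ℤ)
    (τ : Equiv.Perm (Fin N)) (t i : Fin (N + 1)) :
    vertex ε (path m τ t) i = vertex ε m i *
      chain (N + 1) (fun s => emb (N + 1) F σ (uval F ↑(ε (τ s)))) t i := by
  simp only [vertex, unitPow_path, map_mul, map_prod]
  congr 1
  refine Finset.prod_congr rfl fun s _ => ?_
  rw [apply_ite (coordChar i), map_one]
  rfl

lemma log_vertex (ε : Fin N → totPosUnitsMod (N + 1) F σ 𝔣) (m : Fin N → ℤ) (i : Fin (N + 1)) :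
    Real.log (vertex ε m i) = ∑ k, (m k : ℝ) * Real.log (σ i (uval F ↑(ε k))) := by
  let L : totPosUnitsMod (N + 1) F σ 𝔣 →* Multiplicative ℝ :=
    { toFun := fun u => Multiplicative.ofAdd (Real.log (coordChar i u))
      map_one' := by simp
      map_mul' := fun u v => by
        rw [map_mul, Real.log_mul (coordChar_pos i u).ne' (coordChar_pos i v).ne', ofAdd_add] }
  have h : L (unitPow ε m) = ∏ k, L (ε k) ^ m k := by
    rw [unitPow, map_prod]
    exact Finset.prod_congr rfl fun k _ => map_zpow L _ _
  have h2 := congrArg Multiplicative.toAdd h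
  rw [toAdd_prod] at h2
  simpa [toAdd_zpow] using! h2

lemma sign_eq_of_real_sign {x : ℝ} {s : ℤˣ} (h : Real.sign x = ((s : ℤ) : ℝ)) :
    (SignType.sign x : ℤ) = s := by
  rcases lt_trichotomy x 0 with hx | rfl | hx
  · rw [Real.sign_of_neg hx] at h
    rw [sign_neg hx]
    exact_mod_cast h
  · rw [Real.sign_zero] at h
    rw [sign_zero]
    exact_mod_cast h
  · rw [Real.sign_of_pos hx] at h
    rw [sign_pos hx]
    exact_mod_cast h

/-- Translating a simplex by `ε^m` multiplies its determinant by a positive number. -/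
lemma orientation {ε : Fin N → totPosUnitsMod (N + 1) F σ 𝔣}
    (hsign : ∀ τ : Equiv.Perm (Fin N),
      signdet (N + 1) (chain (N + 1) (fun t => emb (N + 1) F σ (uval F ↑(ε (τ t)))))
        = ((Equiv.Perm.sign τ : ℤ) : ℝ)) (m : Fin N → ℤ) (τ : Equiv.Perm (Fin N)) :
    (SignType.sign (Matrix.of fun t => vertex ε (path m τ t)).det : ℤ) =
      (Equiv.Perm.sign τ : ℤ) := by
  have h0 := sign_eq_of_real_sign (hsign τ)
  set c := chain (N + 1) (fun s => emb (N + 1) F σ (uval F ↑(ε (τ s)))) with hc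
  have h1 : (Matrix.of fun t => vertex ε (path m τ t)) =
      Matrix.of fun t i => vertex ε m i * Matrix.of c t i := by
    ext t i
    exact vertex_path ε m τ t i
  have h2 : (Matrix.of fun j i : Fin (N + 1) => c i j) = (Matrix.of c).transpose := rfl
  have hp : 0 < ∏ i, vertex ε m i := Finset.prod_pos fun i _ => coordChar_pos i _
  rw [h2, Matrix.det_transpose] at h0
  rw [h1, Matrix.det_mul_row, sign_mul, sign_pos hp, one_mul, h0]

end

/-- A diagonal scaling that has `α` as an eigenvector, with positive eigenvalue, carries half-open
cones in direction `α` to half-open cones in direction `α`. -/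
lemma cbar_scale {n : ℕ} {α x z : Fin n → ℝ} {v : Fin n → Fin n → ℝ} {r : ℝ} (hr : 0 < r)
    (hα : z * α = r • α) (hx : x ∈ cbar n α v) : z * x ∈ cbar n α fun t => z * v t := by
  obtain ⟨h₀, hh₀, hx⟩ := hx
  refine ⟨r * h₀, mul_pos hr hh₀, fun h h1 h2 => ?_⟩
  obtain ⟨c, hc, hy⟩ := hx (h / r) (div_pos h1 hr) ((div_lt_iff₀' hr).2 h2)
  refine ⟨c, hc, ?_⟩
  have : z * x + h • α = z * (x + (h / r) • α) := by
    rw [mul_add, mul_smul_comm, hα, smul_smul, div_mul_cancel₀ _ hr.ne']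
  rw [this, hy, Finset.mul_sum]
  simp only [mul_smul_comm]

/-- The half-open cones lie in the open positive orthant.  The case to exclude is `x j = 0`
with `α = e_j`: the coordinates of points of a cone spanned by positive vectors are bounded by a
multiple of the `j`-th one, so `x + h α` leaves the cone as `h → 0`, because `x` has another, positive,
coordinate. -/
lemma cbar_pos {N : ℕ} (hN : 1 ≤ N) {α x : Fin (N + 1) → ℝ}
    (hα : ∃ j, α = Pi.single j 1 ∨ α = Pi.single j (-1))
    {v : Fin (N + 1) → Fin (N + 1) → ℝ} (hv : ∀ t i, 0 < v t i) (hx : x ∈ cbar (N + 1) α v)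
    (i : Fin (N + 1)) : 0 < x i := by
  obtain ⟨h₀, hh₀, hx⟩ := hx
  have hpos : ∀ h, 0 < h → h < h₀ → ∀ i, 0 < x i + h * α i := by
    intro h h1 h2 i
    obtain ⟨c, hc, hy⟩ := hx h h1 h2
    have := congrFun hy i
    simp only [Pi.add_apply, Pi.smul_apply, smul_eq_mul, Finset.sum_apply] at this
    rw [this]
    exact Finset.sum_pos (fun t _ => mul_pos (hc t) (hv t i)) ⟨0, Finset.mem_univ _⟩
  obtain ⟨j, hj⟩ := hα
  have hoff : ∀ k, k ≠ j → 0 < x k := by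
    intro k hk
    have h1 : α k = 0 := by rcases hj with rfl | rfl <;> simp [hk]
    have := hpos (h₀ / 2) (by linarith) (by linarith) k
    simpa [h1] using this
  by_cases hij : i ≠ j
  · exact hoff i hij
  push Not at hij
  subst hij
  rcases hj with rfl | rfl
  · by_contra! hxi
    have hxi' : x i = 0 := by
      refine le_antisymm hxi (le_of_forall_pos_lt_add fun e he => ?_)
      have := hpos (min e (h₀ / 2)) (lt_min he (by linarith))
        ((min_le_right _ _).trans_lt (by linarith)) i
      simp only [Pi.single_eq_same, mul_one] at this
      exact this.trans_le (by gcongr; exact min_le_left _ _)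
    obtain ⟨k, hk⟩ : ∃ k : Fin (N + 1), k ≠ i := by
      have : Nontrivial (Fin (N + 1)) := Fin.nontrivial_iff_two_le.2 (by omega)
      exact exists_ne i
    -- at height `h` over the wall `x i = 0` all coordinates in the cone are `O(h)`
    set K := ∑ t, v t k / v t i with hK
    have hKpos : 0 < K :=
      Finset.sum_pos (fun t _ => div_pos (hv t k) (hv t i)) ⟨0, Finset.mem_univ _⟩
    have hbound : ∀ h, 0 < h → h < h₀ → x k ≤ h * K := by
      intro h h1 h2
      obtain ⟨c, hc, hy⟩ := hx h h1 h2
      have hyi := congrFun hy i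
      have hyk := congrFun hy k
      simp only [Pi.add_apply, Pi.smul_apply, smul_eq_mul, Finset.sum_apply, hxi', zero_add,
        Pi.single_eq_same, mul_one] at hyi
      simp only [Pi.add_apply, Pi.smul_apply, smul_eq_mul, Finset.sum_apply,
        Pi.single_eq_of_ne hk, mul_zero, add_zero] at hyk
      rw [hyk, hK, Finset.mul_sum]
      refine Finset.sum_le_sum fun t _ => ?_
      have h3 : c t * v t i ≤ h := by
        rw [hyi]
        exact Finset.single_le_sum (f := fun t => c t * v t i)
          (fun t _ => (mul_pos (hc t) (hv t i)).le) (Finset.mem_univ t)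
      rw [mul_div_assoc', le_div_iff₀ (hv t i)]
      nlinarith [hv t k]
    have hxk := hoff k hk
    have h1 := hbound (min (h₀ / 2) (x k / (2 * K))) (lt_min (by linarith) (by positivity))
      ((min_le_left _ _).trans_lt (by linarith))
    have h2 : min (h₀ / 2) (x k / (2 * K)) * K ≤ x k / (2 * K) * K :=
      mul_le_mul_of_nonneg_right (min_le_right _ _) hKpos.le
    have h3 : x k / (2 * K) * K = x k / 2 := by field_simp
    linarith
  · have := hpos (h₀ / 2) (by linarith) (by linarith) i
    simp only [Pi.single_eq_same] at this
    linarith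

section

variable {N : ℕ} {F : Type} [Field F] [NumberField F] {σ : Fin (N + 1) → (F →+* ℝ)}
  {𝔣 : Ideal (NumberField.RingOfIntegers F)}

/-- The translate `ε^m D` is the union of the half-open cones over the simplices based at `m`. -/
lemma mem_scaleSet_iff {α : Fin (N + 1) → ℝ}
    (hα : ∃ j, α = Pi.single j 1 ∨ α = Pi.single j (-1))
    (ε : Fin N → totPosUnitsMod (N + 1) F σ 𝔣) (m : Fin N → ℤ) (x : Fin (N + 1) → ℝ) :
    x ∈ scaleSet (N + 1) F σ (uval F ↑(unitPow ε m)) (⋃ τ : Equiv.Perm (Fin N),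
      cbar (N + 1) α (chain (N + 1) (fun t => emb (N + 1) F σ (uval F ↑(ε (τ t)))))) ↔
    ∃ τ : Equiv.Perm (Fin N), x ∈ cbar (N + 1) α fun t => vertex ε (path m τ t) := by
  obtain ⟨j, hj⟩ := hα
  have hz : ∀ i, 0 < vertex ε m i := fun i => coordChar_pos i _
  have heig : ∀ z : Fin (N + 1) → ℝ, z * α = z j • α := by
    intro z
    funext i
    by_cases hi : i = j
    · subst hi; rfl
    · rcases hj with rfl | rfl <;> simp [hi]
  have hvp : ∀ τ : Equiv.Perm (Fin N), (fun t => vertex ε (path m τ t)) = fun t => vertex ε m *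
      chain (N + 1) (fun s => emb (N + 1) F σ (uval F ↑(ε (τ s)))) t :=
    fun τ => funext fun t => funext fun i => vertex_path ε m τ t i
  have hinv : ∀ y : Fin (N + 1) → ℝ, vertex ε m * ((vertex ε m)⁻¹ * y) = y := by
    intro y
    funext i
    simp [(hz i).ne']
  have hinv' : ∀ y : Fin (N + 1) → ℝ, (vertex ε m)⁻¹ * (vertex ε m * y) = y := by
    intro y
    funext i
    simp [(hz i).ne']
  constructor
  · rintro ⟨y, hy, rfl⟩
    obtain ⟨τ, hτ⟩ := Set.mem_iUnion.1 hy
    refine ⟨τ, ?_⟩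
    rw [hvp]
    exact cbar_scale (hz j) (heig _) hτ
  · rintro ⟨τ, hτ⟩
    rw [hvp] at hτ
    have h := cbar_scale (inv_pos.2 (hz j)) (heig (vertex ε m)⁻¹) hτ
    simp only [hinv'] at h
    exact ⟨_, Set.mem_iUnion.2 ⟨τ, h⟩, hinv x⟩

/-- The theorem for `n = N + 1`, which makes `n - 1` definitionally equal to `N`. -/
lemma fundamental_domain (hN : 1 ≤ N) (hdeg : Module.finrank ℚ F = N + 1)
    (hinj : Function.Injective σ) (h𝔣 : 𝔣 ≠ ⊥) {α : Fin (N + 1) → ℝ}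
    (hα : ∃ j, α = Pi.single j 1 ∨ α = Pi.single j (-1))
    (ε : Fin N → totPosUnitsMod (N + 1) F σ 𝔣)
    (hV : (Subgroup.closure (Set.range ε)).FiniteIndex)
    (hsign : ∀ τ : Equiv.Perm (Fin N),
      signdet (N + 1) (chain (N + 1) (fun t => emb (N + 1) F σ (uval F ↑(ε (τ t)))))
        = ((Equiv.Perm.sign τ : ℤ) : ℝ))
    (D : Set (Fin (N + 1) → ℝ))
    (hD : D = ⋃ τ : Equiv.Perm (Fin N),
      cbar (N + 1) α (chain (N + 1) (fun t => emb (N + 1) F σ (uval F ↑(ε (τ t)))))) :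
    (⋃ e : Subgroup.closure (Set.range ε),
        scaleSet (N + 1) F σ (uval F ↑↑e) D) = {x : Fin (N + 1) → ℝ | ∀ i, 0 < x i} ∧
    ∀ e e' : Subgroup.closure (Set.range ε), e ≠ e' →
      Disjoint (scaleSet (N + 1) F σ (uval F ↑↑e) D)
        (scaleSet (N + 1) F σ (uval F ↑↑e') D) := by
  subst hD
  have hwall : ∀ m τ (c : Fin (N + 1) → ℝ), α = ∑ t, c t • vertex ε (path m τ t) →
      ∀ t, c t ≠ 0 := by
    intro m τ c hc t ht
    rw [Fin.sum_univ_succAbove _ t, ht, zero_smul, zero_add] at hc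
    obtain ⟨j, hj | hj⟩ := hα
    · exact single_ne_sum hdeg hinj (fun s => uval F ↑(unitPow ε (path m τ (t.succAbove s)))) _ j 1
        one_ne_zero (hj.symm.trans hc)
    · exact single_ne_sum hdeg hinj (fun s => uval F ↑(unitPow ε (path m τ (t.succAbove s)))) _ j
        (-1) (by norm_num) (hj.symm.trans hc)
  have hpart : ∀ x : Fin (N + 1) → ℝ, (∀ i, 0 < x i) →
      ∃! p : (Fin N → ℤ) × Equiv.Perm (Fin N),
        x ∈ cbar (N + 1) α (fun t => vertex ε (path p.1 p.2 t)) := by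
    have hℓ := logIndep_units hdeg hinj h𝔣 ε hV
    have hB : ∀ m i, |Real.log (vertex ε m i) -
        ∑ k, (m k : ℝ) * Real.log (σ i (uval F ↑(ε k)))| ≤ 0 := by
      intro m i
      rw [log_vertex, sub_self, abs_zero]
    have hvpos : ∀ m i, 0 < vertex ε m i := fun m i => coordChar_pos i _
    have hor := orientation hsign
    intro x hx
    exact existsUnique_cbar (V := vertex ε) hℓ hvpos hB hor hwall hx
  have hpos : ∀ x m τ, x ∈ cbar (N + 1) α (fun t => vertex ε (path m τ t)) → ∀ i, 0 < x i :=
    fun x m τ hx => cbar_pos hN hα (fun t i => coordChar_pos i _) hx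
  constructor
  · ext x
    rw [Set.mem_iUnion]
    change _ ↔ ∀ i, 0 < x i
    constructor
    · rintro ⟨⟨e, he⟩, hx⟩
      obtain ⟨m, rfl⟩ := exists_unitPow he
      obtain ⟨τ, hτ⟩ := (mem_scaleSet_iff hα ε m x).1 hx
      exact hpos x m τ hτ
    · intro hx
      obtain ⟨⟨m, τ⟩, hp, -⟩ := hpart x hx
      exact ⟨⟨unitPow ε m, unitPow_mem ε m⟩, (mem_scaleSet_iff hα ε m x).2 ⟨τ, hp⟩⟩
  · rintro ⟨e, he⟩ ⟨e', he'⟩ hne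
    rw [Set.disjoint_left]
    intro x hx hx'
    obtain ⟨m, rfl⟩ := exists_unitPow he
    obtain ⟨m', rfl⟩ := exists_unitPow he'
    obtain ⟨τ, hτ⟩ := (mem_scaleSet_iff hα ε m x).1 hx
    obtain ⟨τ', hτ'⟩ := (mem_scaleSet_iff hα ε m' x).1 hx'
    have := (hpart x (hpos x m τ hτ)).unique (y₁ := (m, τ)) (y₂ := (m', τ')) hτ hτ'
    rw [Prod.mk.injEq] at this
    obtain ⟨rfl, -⟩ := this
    exact hne rfl

end

/-- Colmez's lemma: if `ε₁,…,ε_{n−1} ∈ E₊(𝔣)` generate a finite-index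
subgroup `V` and satisfy `δ([ε_{τ(1)} | ⋯ | ε_{τ(n−1)}]) = sign(τ)` for all permutations
`τ` of `{1,…,n−1}`, and `α` is up to sign a standard basis vector, then
`D = ⋃_τ C̄_α([ε_{τ(1)} | ⋯ | ε_{τ(n−1)}])` is a fundamental domain for the action of
`V` on `ℝ_{>0}^n`: the sets `εD`, `ε ∈ V`, are pairwise disjoint with union
`ℝ_{>0}^n`. -/
theorem statement5
    (n : ℕ) (hn : 2 ≤ n)
    (F : Type) [Field F] [NumberField F]
    (hdeg : Module.finrank ℚ F = n)
    (σ : Fin n → (F →+* ℝ))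
    (hinj : Function.Injective σ)
    (hsurj : ∀ φ : F →+* ℝ, ∃ i, σ i = φ)
    (𝔣 : Ideal (NumberField.RingOfIntegers F)) (h𝔣 : 𝔣 ≠ ⊥)
    (α : Fin n → ℝ) (hα : ∃ j : Fin n, α = Pi.single j 1 ∨ α = Pi.single j (-1))
    (ε : Fin (n - 1) → totPosUnitsMod n F σ 𝔣)
    (hV : (Subgroup.closure (Set.range ε)).FiniteIndex)
    (hsign : ∀ τ : Equiv.Perm (Fin (n - 1)),
      signdet n (chain n (fun t => emb n F σ (uval F ↑(ε (τ t)))))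
        = ((Equiv.Perm.sign τ : ℤ) : ℝ))
    (D : Set (Fin n → ℝ))
    (hD : D = ⋃ τ : Equiv.Perm (Fin (n - 1)),
      cbar n α (chain n (fun t => emb n F σ (uval F ↑(ε (τ t)))))) :
    (⋃ e : Subgroup.closure (Set.range ε),
        scaleSet n F σ (uval F ↑↑e) D) = {x : Fin n → ℝ | ∀ i, 0 < x i} ∧
    ∀ e e' : Subgroup.closure (Set.range ε), e ≠ e' →
      Disjoint (scaleSet n F σ (uval F ↑↑e) D) (scaleSet n F σ (uval F ↑↑e') D) := by
  obtain ⟨N, rfl⟩ : ∃ N, n = N + 1 := ⟨n - 1, by omega⟩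
  exact fundamental_domain (by omega) hdeg hinj h𝔣 hα ε hV hsign D hD

end
end
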